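/- arXiv:1008.0985 — 2 statements merged into one kernel-verified Lean document; each statement's English description precedes it below -/
import Mathlib

section
/- Let H be an infinite-dimensional separable complex Hilbert space and m a positive integer. Suppose A₁ and A₂ are two commutative von Neumann subalgebras of the algebra B(H) of bounded operators on H such that, for i = 1,2: (1) Aᵢ contains no minimal projection, and (2) the commutant of Aᵢ in B(H) is *-isomorphic to the algebra of m×m matrices with entries in Aᵢ. Then A₁ and A₂ are unitarily equivalent: there exists a unitary operator U on H with U A₁ U* = A₂. -/
/-!
The pair (`A`, `A.commutant`) is described by data that do not depend on `A`: a total family of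
vectors of `H`, indexed by `[0, 1] × Fin m`, with a prescribed Gram matrix.

*Cyclic systems.* An isomorphism of the commutant with `m × m` matrices over `A` provides matrix
units `e i j` in the commutant. Since `A` is commutative, every element of the corner
`e 0 0 * A.commutant * e 0 0` has the form `z * e 0 0` with `z ∈ A`, and on a separable space this
produces a unit vector `ξ` whose orbit under `A` is dense in the range of `e 0 0`
(`exists_cyclic`). The operators `v i = e i 0` then move the orbit of `ξ` onto `m` orthogonal
copies which span `H` (`exists_cyclicSystem`), and `ξ` is separating for `A`.

*Uniform resolutions.* A binary expansion shows that projections generate `A`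
(`apply_mem_closure_span_projections`). Refining the chain `0 ≤ 1` successively by a suitable
sequence of projections gives a chain which generates `A` (`exists_generatingChain`). For a level
`t ∈ [0, 1]`, consider the supremum of the members `c` of the chain with `‖c ξ‖ ^ 2 ≤ t` and the
infimum of the others; their difference, if nonzero, would be a minimal projection. So the
completed chain is a family `E t` with `E s * E t = E (min s t)` and `‖E t ξ‖ ^ 2 = t`
(`exists_uniformResolution`), which replaces the usual identification of `A` with `L^∞[0, 1]`.

*The unitary.* The vectors `E t (v i ξ)` are total and their Gram matrix is
`if i = j then min s t else 0`, whichever algebra one starts from. Hence there is a unitary `U`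
with `U * E₁ t = E₂ t * U` for all `t` (`exists_intertwining_unitary`). An operator commuting with
all `E t` commutes with `A` (`IsCyclicSystem.commute_of_commute`), so `U` conjugates `A₁` into the
bicommutant of `A₂`, and `star U` conjugates `A₂` into that of `A₁` (`conj_mem`).
-/

/-- `p` is a minimal projection of the von Neumann algebra `A`: a nonzero self-adjoint
idempotent belonging to `A` such that every projection `q ∈ A` with `q ≤ p`
(i.e. `q * p = q`) equals `0` or `p`. -/
def VonNeumannAlgebra.IsMinimalProjection {H : Type*} [NormedAddCommGroup H]
    [InnerProductSpace ℂ H] [CompleteSpace H]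
    (A : VonNeumannAlgebra H) (p : H →L[ℂ] H) : Prop :=
  p ∈ A ∧ p ≠ 0 ∧ star p = p ∧ p * p = p ∧
    ∀ q ∈ A, star q = q → q * q = q → q * p = q → q = 0 ∨ q = p

namespace VNUnique

open scoped InnerProductSpace

variable {H : Type*} [NormedAddCommGroup H] [InnerProductSpace ℂ H]

/-! ### Density in spans -/

lemma map_mem_closure_of_map_mem {M N : Submodule ℂ H} (T : H →L[ℂ] H)
    (h : ∀ x ∈ M, T x ∈ N.topologicalClosure) {x : H} (hx : x ∈ M.topologicalClosure) :
    T x ∈ N.topologicalClosure := by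
  have : M.topologicalClosure ≤ N.topologicalClosure.comap (T : H →ₗ[ℂ] H) :=
    M.topologicalClosure_minimal h
      (N.isClosed_topologicalClosure.preimage T.continuous)
  exact this hx

lemma map_mem_closure_span {X Y : Set H} (T : H →L[ℂ] H)
    (h : ∀ x ∈ X, T x ∈ (Submodule.span ℂ Y).topologicalClosure) {x : H}
    (hx : x ∈ (Submodule.span ℂ X).topologicalClosure) :
    T x ∈ (Submodule.span ℂ Y).topologicalClosure := by
  refine map_mem_closure_of_map_mem T ?_ hx
  have : Submodule.span ℂ X ≤ (Submodule.span ℂ Y).topologicalClosure.comap (T : H →ₗ[ℂ] H) :=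
    Submodule.span_le.2 h
  exact fun x hx => this hx

/-! ### Refinement of an increasing family of projections -/

/-- Refinement of an increasing sequence `f` of projections by a projection `q`: the
step from `f k` to `f (k + 1)` is cut into the part below `q` followed by the part below `1 - q`.
The projections are meant to commute. -/
noncomputable def refineBy (f : ℕ → H →L[ℂ] H) (q : H →L[ℂ] H) (k : ℕ) : H →L[ℂ] H :=
  if k % 2 = 0 then f (k / 2) else f (k / 2) + (f (k / 2 + 1) - f (k / 2)) * q

lemma refineBy_even (f : ℕ → H →L[ℂ] H) (q : H →L[ℂ] H) (k : ℕ) : refineBy f q (2 * k) = f k := by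
  simp [refineBy]

lemma refineBy_odd (f : ℕ → H →L[ℂ] H) (q : H →L[ℂ] H) (k : ℕ) :
    refineBy f q (2 * k + 1) = f k + (f (k + 1) - f k) * q := by
  have h : (2 * k + 1) / 2 = k := by omega
  simp [refineBy, h]

variable [CompleteSpace H]

/-! ### Projections in a von Neumann algebra -/

/-- Membership through the bicommutant property. -/
lemma mem_of_commute (A : VonNeumannAlgebra H) {x : H →L[ℂ] H}
    (h : ∀ y ∈ A.commutant, y * x = x * y) : x ∈ A := by
  rw [← A.commutant_commutant]
  exact VonNeumannAlgebra.mem_commutant_iff.2 h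

lemma smul_mem (A : VonNeumannAlgebra H) (z : ℂ) {x : H →L[ℂ] H} (hx : x ∈ A) : z • x ∈ A :=
  A.toStarSubalgebra.smul_mem hx z

/-- The orthogonal projection onto a closed subspace invariant under the commutant of `A`
belongs to `A`. -/
lemma starProjection_mem (A : VonNeumannAlgebra H) (M : Submodule ℂ H)
    [M.HasOrthogonalProjection] (h : ∀ y ∈ A.commutant, ∀ x ∈ M, y x ∈ M) :
    M.starProjection ∈ A := by
  rw [VonNeumannAlgebra.IsStarProjection.mem_iff isStarProjection_starProjection]
  intro y hy
  rw [M.range_starProjection]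
  exact fun x hx => h y hy x hx

/-- A nonempty chain of projections of `A` has a supremum in `A`, and the supremum is a limit
of the chain in the strong operator topology. The order `c ≤ d` is encoded as `d * c = c`. -/
lemma exists_sup (A : VonNeumannAlgebra H) (S : Set (H →L[ℂ] H))
    (hA : ∀ c ∈ S, c ∈ A) (hS : ∀ c ∈ S, IsStarProjection c)
    (hchain : ∀ c ∈ S, ∀ d ∈ S, d * c = c ∨ c * d = d) (hne : S.Nonempty) :
    ∃ G ∈ A, IsStarProjection G ∧ (∀ c ∈ S, G * c = c) ∧
      (∀ p : H →L[ℂ] H, (∀ c ∈ S, p * c = c) → p * G = G) ∧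
      ∀ x, G x ∈ closure ((fun c : H →L[ℂ] H => c x) '' S) := by
  let M : Submodule ℂ H :=
    { carrier := {x | ∃ c ∈ S, c x = x}
      zero_mem' := by obtain ⟨c, hc⟩ := hne; exact ⟨c, hc, map_zero c⟩
      smul_mem' := by rintro z x ⟨c, hc, hx⟩; exact ⟨c, hc, by rw [map_smul, hx]⟩
      add_mem' := by
        rintro x y ⟨c, hc, hx⟩ ⟨d, hd, hy⟩
        rcases hchain c hc d hd with h | h
        · refine ⟨d, hd, ?_⟩
          rw [map_add, hy]
          congr 1
          rw [← hx, ← mul_apply_eq_comp, h]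
        · refine ⟨c, hc, ?_⟩
          rw [map_add, hx]
          congr 1
          rw [← hy, ← mul_apply_eq_comp, h] }
  have hM : ∀ x, x ∈ M ↔ ∃ c ∈ S, c x = x := fun x => Iff.rfl
  have : CompleteSpace M.topologicalClosure := M.isClosed_topologicalClosure.completeSpace_coe
  refine ⟨M.topologicalClosure.starProjection, ?_, isStarProjection_starProjection, ?_, ?_, ?_⟩
  · refine starProjection_mem A _ fun y hy x hx => map_mem_closure_of_map_mem y ?_ hx
    rintro x ⟨c, hc, hx⟩
    refine M.le_topologicalClosure ⟨c, hc, ?_⟩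
    have := VonNeumannAlgebra.mem_commutant_iff.1 hy c (hA c hc)
    rw [← mul_apply_eq_comp, this, mul_apply_eq_comp, hx]
  · intro c hc
    ext x
    refine Submodule.starProjection_eq_self_iff.2 (M.le_topologicalClosure ⟨c, hc, ?_⟩)
    exact congr($((hS c hc).isIdempotentElem.eq) x)
  · intro p hp
    have hle : M.topologicalClosure ≤ LinearMap.eqLocus (p : H →ₗ[ℂ] H) LinearMap.id := by
      refine M.topologicalClosure_minimal ?_ (isClosed_eq p.continuous continuous_id)
      rintro x ⟨c, hc, hx⟩
      change p x = x
      rw [← hx, ← mul_apply_eq_comp, hp c hc]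
    ext x
    exact hle (Submodule.starProjection_apply_mem _ x)
  · intro x
    have hx : M.topologicalClosure.starProjection x ∈ closure (M : Set H) := by
      rw [← Submodule.topologicalClosure_coe]
      exact Submodule.starProjection_apply_mem _ x
    rw [Metric.mem_closure_iff] at hx ⊢
    intro ε hε
    obtain ⟨y, ⟨c, hc, hy⟩, hd⟩ := hx (ε / 2) (by positivity)
    refine ⟨c x, ⟨c, hc, rfl⟩, ?_⟩
    set g := M.topologicalClosure.starProjection x with hg
    -- `c x = c g`, because `x - g` is orthogonal to the range of `c`.
    have hcx : c x = c g := by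
      have h0 : c (x - g) = 0 := by
        rw [← inner_self_eq_zero (𝕜 := ℂ)]
        have hsa : ∀ u v, ⟪c u, v⟫_ℂ = ⟪u, c v⟫_ℂ := fun u v => by
          conv_lhs => rw [← (hS c hc).isSelfAdjoint.star_eq]
          exact ContinuousLinearMap.adjoint_inner_left c v u
        rw [hsa]
        refine Submodule.starProjection_inner_eq_zero _ _ (M.le_topologicalClosure ⟨c, hc, ?_⟩)
        rw [← mul_apply_eq_comp, (hS c hc).isIdempotentElem.eq,
          ← mul_apply_eq_comp, (hS c hc).isIdempotentElem.eq]
      rw [map_sub, sub_eq_zero] at h0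
      exact h0
    have hn : ‖c (y - g)‖ ≤ ‖y - g‖ := by
      calc ‖c (y - g)‖ ≤ ‖c‖ * ‖y - g‖ := c.le_opNorm _
        _ ≤ 1 * ‖y - g‖ := by gcongr; exact (hS c hc).norm_le
        _ = _ := one_mul _
    calc dist g (c x) ≤ dist g y + dist y (c x) := dist_triangle _ _ _
      _ = dist g y + ‖c (y - g)‖ := by rw [hcx, map_sub, hy, dist_eq_norm y]
      _ ≤ dist g y + dist g y := by rw [dist_comm g y, dist_eq_norm]; gcongr
      _ < ε := by linarith

/-- One step of the binary expansion: if `0 ≤ a ≤ 1` in `A`, and `p` is the spectral projection of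
`a` for `(1/2, 1]`, then again `0 ≤ a + a - p ≤ 1`. -/
lemma exists_binary_digit (A : VonNeumannAlgebra H) {a : H →L[ℂ] H} (ha : a ∈ A)
    (h0 : 0 ≤ a) (h1 : a ≤ 1) :
    ∃ p ∈ A, IsStarProjection p ∧ 0 ≤ a + a - p ∧ a + a - p ≤ 1 := by
  have hasa : IsSelfAdjoint a := h0.isSelfAdjoint
  set c : H →L[ℂ] H := a + a - 1 with hc
  have hcsa : IsSelfAdjoint c := (hasa.add hasa).sub (IsSelfAdjoint.one _)
  have hcA : c ∈ A := sub_mem (add_mem ha ha) (one_mem A)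
  have hcomm : ∀ y ∈ A.commutant, Commute c⁺ y := by
    intro y hy
    have : Commute c y := VonNeumannAlgebra.mem_commutant_iff.1 hy c hcA
    rw [CFC.posPart_def]
    exact this.cfcₙ_real _
  have hsaP : IsSelfAdjoint c⁺ := (CFC.posPart_nonneg c).isSelfAdjoint
  set K : Submodule ℂ H := LinearMap.ker (c⁺ : H →L[ℂ] H).toLinearMap with hK
  have hKmem : ∀ x, x ∈ K ↔ c⁺ x = 0 := fun x => Iff.rfl
  have hKc : IsClosed (K : Set H) := ContinuousLinearMap.isClosed_ker (c⁺ : H →L[ℂ] H)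
  have : CompleteSpace K := hKc.completeSpace_coe
  set r := K.starProjection with hr
  have hrA : r ∈ A := by
    refine starProjection_mem A _ fun y hy x hx => ?_
    rw [hKmem] at hx ⊢
    have := (hcomm y hy).eq
    rw [← mul_apply_eq_comp, this, mul_apply_eq_comp, hx, map_zero]
  have hrp : IsStarProjection r := isStarProjection_starProjection
  have hPr : c⁺ * r = 0 := by
    ext x
    exact (hKmem _).1 (Submodule.starProjection_apply_mem _ x)
  have hrN : r * c⁻ = c⁻ := by
    ext x
    refine Submodule.starProjection_eq_self_iff.2 ((hKmem _).2 ?_)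
    exact congr($(CFC.posPart_mul_negPart c) x)
  have hNr : c⁻ * r = c⁻ := by
    have := congr(star $hrN)
    rwa [star_mul, hrp.isSelfAdjoint.star_eq,
      (CFC.negPart_nonneg c).isSelfAdjoint.star_eq] at this
  have hsub : c⁺ - c⁻ = c := CFC.posPart_sub_negPart c hcsa
  have hcr : c * r = -c⁻ := by
    calc c * r = (c⁺ - c⁻) * r := by rw [hsub]
      _ = -c⁻ := by rw [sub_mul, hPr, hNr, zero_sub]
  have hra : r * a = a * r := by
    have hcr' : r * c = -c⁻ := by
      have := congr(star $hcr)
      rwa [star_mul, hrp.isSelfAdjoint.star_eq, hcsa.star_eq, star_neg,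
        (CFC.negPart_nonneg c).isSelfAdjoint.star_eq] at this
    have h2 : r * (a + a) = (a + a) * r := by
      have : a + a = c + 1 := by rw [hc]; abel
      rw [this, mul_add, add_mul, hcr', hcr]; simp
    have h3 : (2 : ℂ) • (r * a) = (2 : ℂ) • (a * r) := by
      rw [two_smul, two_smul, ← mul_add, h2, add_mul]
    exact (smul_right_injective _ (two_ne_zero' ℂ)) h3
  have hrr : r * r = r := hrp.isIdempotentElem.eq
  have har : 0 ≤ a * r := by
    have : a * r = star r * a * r := by
      rw [hrp.isSelfAdjoint.star_eq, hra, mul_assoc, hrr]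
    rw [this]; exact star_left_conjugate_nonneg h0 r
  have h1a : 0 ≤ (1 - a) * (1 - r) := by
    have : (1 - a) * (1 - r) = star (1 - r) * (1 - a) * (1 - r) := by
      rw [hrp.one_sub.isSelfAdjoint.star_eq]
      have h : (1 - r) * (1 - a) = (1 - a) * (1 - r) := by
        simp only [mul_sub, sub_mul, mul_one, one_mul, hra]; abel
      rw [h, mul_assoc, hrp.one_sub.isIdempotentElem.eq]
    rw [this]; exact star_left_conjugate_nonneg (sub_nonneg.2 h1) _
  have hNeg : c⁻ = r - a * r - a * r := by
    rw [← neg_eq_iff_eq_neg.2 hcr, hc, sub_mul, add_mul, one_mul]; abel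
  refine ⟨1 - r, sub_mem (one_mem A) hrA, hrp.one_sub, ?_, ?_⟩
  · have : a + a - (1 - r) = c⁺ + (a * r + a * r) := by
      have : c⁺ = c + c⁻ := sub_eq_iff_eq_add.1 hsub
      rw [this, hNeg, hc]; abel
    rw [this]
    exact add_nonneg (CFC.posPart_nonneg c) (add_nonneg har har)
  · rw [← sub_nonneg]
    have : 1 - (a + a - (1 - r)) = c⁻ + ((1 - a) * (1 - r) + (1 - a) * (1 - r)) := by
      rw [hNeg]
      simp only [mul_sub, sub_mul, mul_one, one_mul]; abel
    rw [this]
    exact add_nonneg (CFC.negPart_nonneg c) (add_nonneg h1a h1a)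

/-- The projections of `A` generate `A`, tested on a vector: iterating the binary expansion
approximates positive contractions, which span `A`. -/
lemma apply_mem_closure_span_projections (A : VonNeumannAlgebra H) (η : H) {a : H →L[ℂ] H}
    (ha : a ∈ A) :
    a η ∈ (Submodule.span ℂ {x | ∃ p ∈ A, IsStarProjection p ∧ x = p η}).topologicalClosure := by
  set M := Submodule.span ℂ {x | ∃ p ∈ A, IsStarProjection p ∧ x = p η} with hM
  have hunit : ∀ n : ℕ, ∀ b ∈ A, 0 ≤ b → b ≤ 1 → ∃ y ∈ M, ‖b η - y‖ ≤ (1 / 2) ^ n * ‖η‖ := by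
    intro n
    induction n with
    | zero =>
      intro b hb h0 h1
      refine ⟨0, M.zero_mem, ?_⟩
      rw [sub_zero, pow_zero]
      exact b.le_of_opNorm_le ((CStarAlgebra.norm_le_one_iff_of_nonneg b h0).2 h1) η
    | succ n ih =>
      intro b hb h0 h1
      obtain ⟨p, hp, hpp, hl, hu⟩ := exists_binary_digit A hb h0 h1
      obtain ⟨y, hy, hle⟩ := ih (b + b - p) (sub_mem (add_mem hb hb) hp) hl hu
      refine ⟨(1 / 2 : ℂ) • (p η + y), M.smul_mem _ (M.add_mem (Submodule.subset_span
        ⟨p, hp, hpp, rfl⟩) hy), ?_⟩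
      have : b η - (1 / 2 : ℂ) • (p η + y) = (1 / 2 : ℂ) • ((b + b - p) η - y) := by
        simp only [sub_apply, add_apply]
        module
      rw [this, norm_smul, pow_succ']
      simp only [one_div, norm_inv, RCLike.norm_ofNat] at *
      nlinarith
  have hunit' : ∀ b ∈ A, 0 ≤ b → b ≤ 1 → b η ∈ M.topologicalClosure := by
    intro b hb h0 h1
    change b η ∈ closure (M : Set H)
    rw [Metric.mem_closure_iff]
    intro ε hε
    have ht : Filter.Tendsto (fun n : ℕ => (1 / 2 : ℝ) ^ n * ‖η‖) Filter.atTop (nhds (0 * ‖η‖)) :=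
      (tendsto_pow_atTop_nhds_zero_of_lt_one (by norm_num) (by norm_num)).mul_const _
    rw [zero_mul] at ht
    obtain ⟨n, hn⟩ := (ht.eventually_lt_const hε).exists
    obtain ⟨y, hy, hle⟩ := hunit n b hb h0 h1
    exact ⟨y, hy, by rw [dist_eq_norm]; exact hle.trans_lt hn⟩
  have hsa : ∀ b ∈ A, IsSelfAdjoint b → b η ∈ M.topologicalClosure := by
    intro b hb hbs
    set t : ℝ := ‖b‖ + 1 with ht
    have htpos : 0 < t := by positivity
    have hup : b ≤ algebraMap ℝ _ t :=
      hbs.le_algebraMap_norm_self.trans (algebraMap_mono _ (by linarith))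
    have hlo : -algebraMap ℝ (H →L[ℂ] H) t ≤ b :=
      (neg_le_neg (algebraMap_mono _ (by linarith))).trans hbs.neg_algebraMap_norm_le_self
    have hd : (2 * t)⁻¹ • (b + algebraMap ℝ (H →L[ℂ] H) t) =
        ((2 * t : ℝ) : ℂ)⁻¹ • b + (1 / 2 : ℂ) • (1 : H →L[ℂ] H) := by
      ext x
      simp only [Algebra.algebraMap_eq_smul_one, smul_apply,
        add_apply, one_apply_eq_self]
      rw [RCLike.real_smul_eq_coe_smul (K := ℂ), RCLike.real_smul_eq_coe_smul (K := ℂ) t,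
        smul_add, smul_smul]
      congr 2
      · simp
      · have : (t : ℂ) ≠ 0 := by exact_mod_cast htpos.ne'
        simp; field_simp
    have key := hunit' ((2 * t)⁻¹ • (b + algebraMap ℝ (H →L[ℂ] H) t))
      (by rw [hd]; exact add_mem (smul_mem A _ hb) (smul_mem A _ (one_mem A)))
      (smul_nonneg (by positivity) (by rw [← sub_neg_eq_add]; exact sub_nonneg.2 hlo))
      (by
        have h1 : b + algebraMap ℝ (H →L[ℂ] H) t ≤ (2 * t) • 1 := by
          rw [two_mul, add_smul, ← Algebra.algebraMap_eq_smul_one]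
          gcongr
        calc _ ≤ (2 * t)⁻¹ • ((2 * t) • (1 : H →L[ℂ] H)) :=
              smul_le_smul_of_nonneg_left h1 (by positivity)
          _ = 1 := by rw [smul_smul, inv_mul_cancel₀ (by positivity), one_smul])
    rw [hd] at key
    have hη : η ∈ M.topologicalClosure :=
      hunit' 1 (one_mem A) zero_le_one le_rfl
    have hb' : b η = ((2 * t : ℝ) : ℂ) • ((((2 * t : ℝ) : ℂ)⁻¹ • b +
        (1 / 2 : ℂ) • (1 : H →L[ℂ] H)) η - (1 / 2 : ℂ) • η) := by
      have : ((2 * t : ℝ) : ℂ) ≠ 0 := by exact_mod_cast (by positivity : (2 * t : ℝ) ≠ 0)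
      simp only [smul_apply,
        add_apply, one_apply_eq_self, add_sub_cancel_right]
      rw [smul_smul, mul_inv_cancel₀ this, one_smul]
    rw [hb']
    exact Submodule.smul_mem _ _ (Submodule.sub_mem _ key (Submodule.smul_mem _ _ hη))
  have hre := hsa (a + star a) (add_mem ha (star_mem ha)) (by
    rw [IsSelfAdjoint, star_add, star_star, add_comm])
  have him := hsa (Complex.I • (a - star a)) (smul_mem A _ (sub_mem ha (star_mem ha))) (by
    rw [IsSelfAdjoint, star_smul, star_sub, star_star, RCLike.star_def, Complex.conj_I, neg_smul,
      ← smul_neg, neg_sub])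
  have : a η = (1 / 2 : ℂ) • ((a + star a) η - Complex.I • (Complex.I • (a - star a)) η) := by
    simp only [smul_apply, sub_apply,
        add_apply, smul_smul, Complex.I_mul_I]
    module
  rw [this]
  exact Submodule.smul_mem _ _ (Submodule.sub_mem _ hre (Submodule.smul_mem _ _ him))

lemma starProj_inner {p : H →L[ℂ] H} (hp : IsStarProjection p) (u v : H) :
    ⟪p u, v⟫_ℂ = ⟪u, p v⟫_ℂ := by
  conv_lhs => rw [← hp.isSelfAdjoint.star_eq]
  exact ContinuousLinearMap.adjoint_inner_left p v u

lemma starProj_mul_symm {c d : H →L[ℂ] H} (hc : IsStarProjection c) (hd : IsStarProjection d)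
    (h : d * c = c) : c * d = c := by
  have := congr(star $h)
  rwa [star_mul, hc.isSelfAdjoint.star_eq, hd.isSelfAdjoint.star_eq] at this

lemma starProj_pythagoras {c d : H →L[ℂ] H} (hc : IsStarProjection c) (hd : IsStarProjection d)
    (h : d * c = c) (η : H) : ‖d η‖ ^ 2 = ‖c η‖ ^ 2 + ‖d η - c η‖ ^ 2 := by
  have hcd := starProj_mul_symm hc hd h
  have h0 : ⟪c η, d η - c η⟫_ℂ = 0 := by
    rw [starProj_inner hc, map_sub, ← mul_apply_eq_comp, ← mul_apply_eq_comp, hcd,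
      hc.isIdempotentElem.eq, sub_self, inner_zero_right]
  have := norm_add_sq_eq_norm_sq_add_norm_sq_of_inner_eq_zero (c η) (d η - c η) h0
  rw [add_sub_cancel] at this
  nlinarith

/-! ### Generating chains of projections -/

/-- A finite increasing family of projections of `A` from `0` to `1`, indexed by `ℕ` and
eventually constant. -/
structure IsLadder (A : VonNeumannAlgebra H) (f : ℕ → H →L[ℂ] H) : Prop where
  zero : f 0 = 0
  mem : ∀ k, f k ∈ A
  proj : ∀ k, IsStarProjection (f k)
  step : ∀ k, f (k + 1) * f k = f k
  top : ∃ N, ∀ k, N ≤ k → f k = 1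

variable {A : VonNeumannAlgebra H}

lemma IsLadder.refine (hcomm : ∀ x ∈ A, ∀ y ∈ A, x * y = y * x) {f : ℕ → H →L[ℂ] H}
    (hf : IsLadder A f) {q : H →L[ℂ] H} (hq : q ∈ A) (hqp : IsStarProjection q) :
    IsLadder A (refineBy f q) := by
  have hdiff : ∀ k, IsStarProjection (f (k + 1) - f k) := fun k =>
    (hf.proj k).sub_of_mul_eq_right (hf.proj (k + 1)) (hf.step k)
  have hfs : ∀ k, f k * f (k + 1) = f k := fun k =>
    starProj_mul_symm (hf.proj k) (hf.proj _) (hf.step k)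
  have hii : ∀ k, f k * f k = f k := fun k => (hf.proj k).isIdempotentElem.eq
  refine ⟨by simpa [refineBy] using hf.zero, fun k => ?_, fun k => ?_, fun k => ?_, ?_⟩
  · obtain ⟨j, rfl | rfl⟩ := Nat.even_or_odd' k
    · rw [refineBy_even]; exact hf.mem j
    · rw [refineBy_odd]
      exact add_mem (hf.mem j) (mul_mem (sub_mem (hf.mem _) (hf.mem _)) hq)
  · obtain ⟨j, rfl | rfl⟩ := Nat.even_or_odd' k
    · rw [refineBy_even]; exact hf.proj j
    · rw [refineBy_odd]
      refine (hf.proj j).add ((hdiff j).mul hqp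
        (hcomm _ (sub_mem (hf.mem _) (hf.mem _)) _ hq)) ?_
      rw [← mul_assoc, mul_sub, hfs, hii, sub_self, zero_mul]
  · obtain ⟨j, rfl | rfl⟩ := Nat.even_or_odd' k
    · rw [refineBy_even, refineBy_odd, add_mul, hii, mul_assoc, hcomm q hq _ (hf.mem j),
        ← mul_assoc, sub_mul, hf.step, hii, sub_self, zero_mul, add_zero]
    · rw [show 2 * j + 1 + 1 = 2 * (j + 1) by ring, refineBy_even, refineBy_odd, mul_add, hf.step,
        ← mul_assoc, mul_sub, hii, hf.step]
  · obtain ⟨N, hN⟩ := hf.top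
    refine ⟨2 * N, fun k hk => ?_⟩
    obtain ⟨j, rfl | rfl⟩ := Nat.even_or_odd' k
    · rw [refineBy_even]; exact hN j (by omega)
    · rw [refineBy_odd, hN j (by omega), hN (j + 1) (by omega), sub_self, zero_mul, add_zero]

lemma IsLadder.mem_span_refine {f : ℕ → H →L[ℂ] H} (hf : IsLadder A f) (q : H →L[ℂ] H) :
    q ∈ Submodule.span ℂ (Set.range (refineBy f q)) := by
  obtain ⟨N, hN⟩ := hf.top
  have hsum : ∑ k ∈ Finset.range N,
      (refineBy f q (2 * k + 1) - refineBy f q (2 * k)) = q := by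
    simp_rw [refineBy_odd, refineBy_even, add_sub_cancel_left]
    rw [← Finset.sum_mul, Finset.sum_range_sub, hN N le_rfl, hf.zero, sub_zero, one_mul]
  have hsub : ∀ k, refineBy f q k ∈ Submodule.span ℂ (Set.range (refineBy f q)) :=
    fun k => Submodule.subset_span ⟨k, rfl⟩
  have hmem := Submodule.sum_mem _ fun k (_ : k ∈ Finset.range N) =>
    Submodule.sub_mem _ (hsub (2 * k + 1)) (hsub (2 * k))
  rwa [hsum] at hmem

lemma IsLadder.mul_of_le {f : ℕ → H →L[ℂ] H} (hf : IsLadder A f) {i j : ℕ} (h : i ≤ j) :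
    f j * f i = f i := by
  induction j, h using Nat.le_induction with
  | base => exact (hf.proj i).isIdempotentElem.eq
  | succ j _ ih => rw [← ih, ← mul_assoc, hf.step]

/-- `S` is a chain of projections of `A` containing `0` and `1` which generates `A`, in the sense
that its linear span applied to `η` is dense in the orbit `A η`. -/
structure IsGeneratingChain (A : VonNeumannAlgebra H) (η : H) (S : Set (H →L[ℂ] H)) : Prop where
  zero : 0 ∈ S
  one : 1 ∈ S
  mem : ∀ c ∈ S, c ∈ A
  proj : ∀ c ∈ S, IsStarProjection c
  chain : ∀ c ∈ S, ∀ d ∈ S, d * c = c ∨ c * d = d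
  dense : ∀ a ∈ A, a η ∈ (Submodule.span ℂ {x | ∃ c ∈ S, x = c η}).topologicalClosure

/-- A generating chain is obtained by successively refining the ladder `0 ≤ 1` by the members of
a sequence of projections whose values at `η` are dense among those of all projections of `A`. -/
lemma exists_generatingChain [TopologicalSpace.SeparableSpace H]
    (hcomm : ∀ x ∈ A, ∀ y ∈ A, x * y = y * x) (η : H) : ∃ S, IsGeneratingChain A η S := by
  set X : Set H := {x | ∃ p ∈ A, IsStarProjection p ∧ x = p η} with hX
  have : SecondCountableTopology H := UniformSpace.secondCountable_of_separable H
  have : Nonempty X := ⟨⟨0, 0, zero_mem A, .zero _, rfl⟩⟩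
  obtain ⟨u, hu⟩ := TopologicalSpace.exists_dense_seq X
  choose q hqA hqp hqu using fun n => (u n).2
  let F : ℕ → ℕ → H →L[ℂ] H := fun n =>
    Nat.rec (fun k => if k = 0 then 0 else 1) (fun n f => refineBy f (q n)) n
  have hF : ∀ n, F (n + 1) = refineBy (F n) (q n) := fun n => rfl
  have hF0 : ∀ k, F 0 k = if k = 0 then 0 else 1 := fun k => rfl
  have hlad : ∀ n, IsLadder A (F n) := by
    intro n
    induction n with
    | zero =>
      refine ⟨rfl, fun k => ?_, fun k => ?_, fun k => ?_, 1, fun k hk => ?_⟩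
      · rw [hF0]
        split_ifs
        exacts [zero_mem A, one_mem A]
      · rw [hF0]
        split_ifs
        exacts [.zero _, .one _]
      · simp [hF0]
      · rw [hF0, if_neg (by omega)]
    | succ n ih => rw [hF]; exact ih.refine hcomm (hqA n) (hqp n)
  have hmono : Monotone fun n => Set.range (F n) := by
    refine monotone_nat_of_le_succ fun n => ?_
    rintro _ ⟨k, rfl⟩
    exact ⟨2 * k, by rw [hF, refineBy_even]⟩
  refine ⟨⋃ n, Set.range (F n), ?_, ?_, ?_, ?_, ?_, ?_⟩
  · exact Set.mem_iUnion.2 ⟨0, 0, (hlad 0).zero⟩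
  · obtain ⟨N, hN⟩ := (hlad 0).top
    exact Set.mem_iUnion.2 ⟨0, N, hN N le_rfl⟩
  · intro c hc
    obtain ⟨n, k, rfl⟩ := Set.mem_iUnion.1 hc
    exact (hlad n).mem k
  · intro c hc
    obtain ⟨n, k, rfl⟩ := Set.mem_iUnion.1 hc
    exact (hlad n).proj k
  · intro c hc d hd
    obtain ⟨n, hn⟩ := Set.mem_iUnion.1 hc
    obtain ⟨m, hm⟩ := Set.mem_iUnion.1 hd
    obtain ⟨i, rfl⟩ := hmono (le_max_left n m) hn
    obtain ⟨j, rfl⟩ := hmono (le_max_right n m) hm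
    rcases le_total i j with h | h
    · exact Or.inl ((hlad _).mul_of_le h)
    · exact Or.inr ((hlad _).mul_of_le h)
  · intro a ha
    set M := Submodule.span ℂ {x | ∃ c ∈ ⋃ n, Set.range (F n), x = c η} with hM
    have hq : ∀ n, q n η ∈ M := by
      intro n
      have hle : Submodule.span ℂ (Set.range (refineBy (F n) (q n))) ≤
          M.comap (ContinuousLinearMap.apply ℂ H η : (H →L[ℂ] H) →ₗ[ℂ] H) := by
        rw [Submodule.span_le]
        rintro _ ⟨k, rfl⟩
        exact Submodule.subset_span ⟨_, Set.mem_iUnion.2 ⟨n + 1, k, rfl⟩, rfl⟩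
      exact hle ((hlad n).mem_span_refine (q n))
    have hXM : X ⊆ M.topologicalClosure := by
      intro x hx
      change x ∈ closure (M : Set H)
      have h1 : (⟨x, hx⟩ : X) ∈ closure (Set.range u) := hu _
      rw [closure_subtype] at h1
      refine closure_mono ?_ h1
      rintro _ ⟨_, ⟨n, rfl⟩, rfl⟩
      rw [hqu n]; exact hq n
    exact Submodule.topologicalClosure_minimal _ (Submodule.span_le.2 hXM)
      M.isClosed_topologicalClosure (apply_mem_closure_span_projections A η ha)

/-! ### Uniform resolutions of the identity -/

/-- A generating chain of an algebra without minimal projections has no gaps: every level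
`t ∈ [0, 1]` is attained by the supremum of the chain below level `t`. -/
lemma IsGeneratingChain.exists_level (hcomm : ∀ x ∈ A, ∀ y ∈ A, x * y = y * x)
    (hmin : ¬ ∃ p, A.IsMinimalProjection p) {η : H} (hη : ‖η‖ = 1)
    (hsep : ∀ a ∈ A, a η = 0 → a = 0) {S : Set (H →L[ℂ] H)} (hS : IsGeneratingChain A η S)
    {t : ℝ} (ht0 : 0 ≤ t) (ht1 : t ≤ 1) :
    ∃ E ∈ A, IsStarProjection E ∧ (∀ c ∈ S, ‖c η‖ ^ 2 ≤ t → E * c = c) ∧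
      (∀ p : H →L[ℂ] H, (∀ c ∈ S, ‖c η‖ ^ 2 ≤ t → p * c = c) → p * E = E) ∧
      ‖E η‖ ^ 2 = t := by
  -- `E` is the supremum of the chain below level `t`, `F = 1 - F'` the infimum of the rest.
  obtain ⟨E, hEA, hEp, hEc, hEsup, hEcl⟩ := exists_sup A {c ∈ S | ‖c η‖ ^ 2 ≤ t}
    (fun c hc => hS.mem c hc.1) (fun c hc => hS.proj c hc.1)
    (fun c hc d hd => hS.chain c hc.1 d hd.1) ⟨0, hS.zero, by simpa using ht0⟩
  obtain ⟨F', hFA', hFp', hFc', hFsup', hFcl'⟩ := exists_sup A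
    ((fun c => 1 - c) '' {c ∈ S | t < ‖c η‖ ^ 2 ∨ c = 1})
    (by rintro _ ⟨c, hc, rfl⟩; exact sub_mem (one_mem A) (hS.mem c hc.1))
    (by rintro _ ⟨c, hc, rfl⟩; exact (hS.proj c hc.1).one_sub)
    (by
      rintro _ ⟨c, hc, rfl⟩ _ ⟨d, hd, rfl⟩
      rcases hS.chain c hc.1 d hd.1 with h | h
      · right
        simp only [mul_sub, sub_mul, mul_one, one_mul,
          starProj_mul_symm (hS.proj c hc.1) (hS.proj d hd.1) h]
        abel
      · left
        simp only [mul_sub, sub_mul, mul_one, one_mul,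
          starProj_mul_symm (hS.proj d hd.1) (hS.proj c hc.1) h]
        abel)
    ⟨1 - 1, 1, ⟨hS.one, Or.inr rfl⟩, rfl⟩
  set F := 1 - F' with hF
  have hFA : F ∈ A := sub_mem (one_mem A) hFA'
  have hFp : IsStarProjection F := hFp'.one_sub
  have hFF : F' = 1 - F := by rw [hF]; abel
  have hFc : ∀ c ∈ S, (t < ‖c η‖ ^ 2 ∨ c = 1) → c * F = F := by
    intro c hc h
    have := hFc' (1 - c) ⟨c, ⟨hc, h⟩, rfl⟩
    rw [hFF, sub_mul, one_mul, sub_eq_self, mul_sub, mul_one, sub_eq_zero] at this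
    rw [hcomm c (hS.mem c hc) F hFA, ← this]
  have hcF : ∀ c ∈ S, ‖c η‖ ^ 2 ≤ t → c * F = c := by
    intro c hc hct
    have := hFsup' (1 - c) (by
      rintro _ ⟨d, ⟨hd, hdt⟩, rfl⟩
      have hcd : c * d = c := by
        rcases hdt with hdt | rfl
        · rcases hS.chain c hc d hd with h | h
          · exact starProj_mul_symm (hS.proj c hc) (hS.proj d hd) h
          · have := starProj_pythagoras (hS.proj d hd) (hS.proj c hc) h η
            nlinarith [sq_nonneg ‖c η - d η‖]
        · exact mul_one c
      rw [sub_mul, one_mul, mul_sub, mul_one, hcd, sub_self, sub_zero])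
    rw [hFF, sub_mul, one_mul, sub_eq_self, mul_sub, mul_one, sub_eq_zero] at this
    exact this.symm
  have hFE : F * E = E := hEsup F fun c hc => by
    rw [hcomm F hFA c (hS.mem c hc.1)]; exact hcF c hc.1 hc.2
  have hEt : ‖E η‖ ^ 2 ≤ t := by
    have hcl : IsClosed {x : H | ‖x‖ ^ 2 ≤ t} := isClosed_le (by fun_prop) continuous_const
    refine closure_minimal ?_ hcl (hEcl η)
    rintro _ ⟨c, hc, rfl⟩
    exact hc.2
  have hFt : t ≤ ‖F η‖ ^ 2 := by
    have hcl : IsClosed {x : H | t ≤ ‖η - x‖ ^ 2} := isClosed_le continuous_const (by fun_prop)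
    have : F' η ∈ {x : H | t ≤ ‖η - x‖ ^ 2} := by
      refine closure_minimal ?_ hcl (hFcl' η)
      rintro _ ⟨_, ⟨c, ⟨hc, hct⟩, rfl⟩, rfl⟩
      change t ≤ ‖η - (η - c η)‖ ^ 2
      rw [sub_sub_cancel]
      rcases hct with h | rfl
      · exact h.le
      · rw [one_apply_eq_self, hη]; simpa using ht1
    exact this
  set e := F - E with he
  have heA : e ∈ A := sub_mem hFA hEA
  have hep : IsStarProjection e := hEp.sub_of_mul_eq_right hFp hFE
  -- Every member of the chain contains `e` or is orthogonal to it, so a projection `q ≤ e` of `A`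
  -- has `q η` proportional to `e η`; hence `e`, if nonzero, is minimal.
  have he0 : e = 0 := by
    by_contra hne
    refine hmin ⟨e, heA, hne, hep.isSelfAdjoint.star_eq, hep.isIdempotentElem.eq, ?_⟩
    intro q hq hqs hqq hqe
    have hce : ∀ c ∈ S, e * c = 0 ∨ e * c = e := by
      intro c hc
      rw [hcomm e heA c (hS.mem c hc), he, mul_sub]
      by_cases h : ‖c η‖ ^ 2 ≤ t
      · left
        rw [hcF c hc h, starProj_mul_symm (hS.proj c hc) hEp (hEc c ⟨hc, h⟩), sub_self]
      · right
        have hcF' := hFc c hc (Or.inl (not_le.1 h))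
        rw [hcF', ← hFE, ← mul_assoc, hcF']
    have hqη : q η ∈ Submodule.span ℂ {e η} := by
      have h1 := map_mem_closure_span (Y := {e η}) e (by
        rintro _ ⟨c, hc, rfl⟩
        rw [← mul_apply_eq_comp]
        rcases hce c hc with h | h <;> rw [h]
        · exact zero_mem _
        · exact Submodule.le_topologicalClosure _ (Submodule.mem_span_singleton_self _))
        (hS.dense q hq)
      rwa [← mul_apply_eq_comp, hcomm e heA q hq, hqe,
        IsClosed.submodule_topologicalClosure_eq (Submodule.closed_of_finiteDimensional _)] at h1
    obtain ⟨z, hz⟩ := Submodule.mem_span_singleton.1 hqη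
    have hzq : z • q η = q η := by
      calc z • q η = z • (q * e) η := by rw [hqe]
        _ = q (z • e η) := by rw [map_smul]; rfl
        _ = (q * q) η := by rw [hz]; rfl
        _ = q η := by rw [hqq]
    by_cases hq0 : q η = 0
    · exact Or.inl (hsep q hq hq0)
    · right
      have hz1 : z = 1 := by
        by_contra hz1
        have : (z - 1) • q η = 0 := by rw [sub_smul, one_smul, hzq, sub_self]
        rcases smul_eq_zero.1 this with h | h
        · exact hz1 (sub_eq_zero.1 h)
        · exact hq0 h
      rw [hz1, one_smul] at hz
      exact sub_eq_zero.1 (hsep (q - e) (sub_mem hq heA) (by rw [sub_apply, hz, sub_self]))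
  have hEF : F = E := sub_eq_zero.1 he0
  refine ⟨E, hEA, hEp, fun c hc h => hEc c ⟨hc, h⟩, fun p hp => hEsup p fun c hc => hp c hc.1 hc.2,
    le_antisymm hEt (hEF ▸ hFt)⟩

open unitInterval in
/-- `E` is an increasing family of projections over `[0, 1]` in `A` which generates `A`, tested on
the vector `η`, and whose distribution in the state of `η` is Lebesgue measure. -/
structure IsUniformResolution (A : VonNeumannAlgebra H) (η : H) (E : I → H →L[ℂ] H) : Prop where
  mem : ∀ t, E t ∈ A
  proj : ∀ t, IsStarProjection (E t)
  mul : ∀ s t, E s * E t = E (min s t)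
  norm_sq : ∀ t, ‖E t η‖ ^ 2 = t
  dense : ∀ a ∈ A, a η ∈ (Submodule.span ℂ {x | ∃ t, x = E t η}).topologicalClosure

/-- The levels of a generating chain, reparametrized by `‖E η‖ ^ 2`, form a uniform resolution. -/
lemma exists_uniformResolution [TopologicalSpace.SeparableSpace H]
    (hcomm : ∀ x ∈ A, ∀ y ∈ A, x * y = y * x) (hmin : ¬ ∃ p, A.IsMinimalProjection p) {η : H}
    (hη : ‖η‖ = 1) (hsep : ∀ a ∈ A, a η = 0 → a = 0) : ∃ E, IsUniformResolution A η E := by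
  obtain ⟨S, hS⟩ := exists_generatingChain hcomm η
  choose E hEA hEp hEc hEsup hEt using fun t : unitInterval =>
    hS.exists_level hcomm hmin hη hsep t.2.1 t.2.2
  have hmul : ∀ s t, s ≤ t → E t * E s = E s := fun s t hst =>
    hEsup s (E t) fun c hc hcs => hEc t c hc (hcs.trans hst)
  refine ⟨E, hEA, hEp, fun s t => ?_, hEt, fun a ha => ?_⟩
  · rcases le_total s t with h | h
    · rw [min_eq_left h]; exact starProj_mul_symm (hEp s) (hEp t) (hmul s t h)
    · rw [min_eq_right h]; exact hmul t s h
  · refine Submodule.topologicalClosure_mono (Submodule.span_mono ?_) (hS.dense a ha)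
    rintro _ ⟨c, hc, rfl⟩
    have hle : ‖c η‖ ^ 2 ≤ 1 := by
      have := starProj_pythagoras (hS.proj c hc) (.one _) (one_mul c) η
      rw [one_apply_eq_self, hη] at this
      nlinarith [sq_nonneg ‖η - c η‖]
    refine ⟨⟨‖c η‖ ^ 2, by positivity, hle⟩, ?_⟩
    set t : unitInterval := ⟨‖c η‖ ^ 2, by positivity, hle⟩
    have := starProj_pythagoras (hS.proj c hc) (hEp t) (hEc t c hc le_rfl) η
    rw [hEt t] at this
    have h0 : ‖E t η - c η‖ ^ 2 = 0 := by
      change ‖c η‖ ^ 2 = _ at this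
      linarith
    exact (sub_eq_zero.1 (norm_eq_zero.1 (pow_eq_zero_iff two_ne_zero |>.1 h0))).symm

/-! ### Cyclic systems from matrix units -/

/-- If the corner `p A' p` of the commutant `A'`, for a projection `p` of `A'`, is no larger than
`A p`, then the range of `p` has a cyclic vector for `A`. The vector is a weighted sum of the
orthogonalized members `η n` of a dense sequence: the projections `R n` onto the invariant
subspaces spanned by the orbits of the first `n` members act on the range of `p` as elements of
`A`, and `R (n + 1) - R n` recovers `η n` from the sum. -/
lemma exists_cyclic [TopologicalSpace.SeparableSpace H] {p : H →L[ℂ] H} (hpA : p ∈ A.commutant)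
    (hp : IsStarProjection p) (hp0 : p ≠ 0)
    (hcorner : ∀ x ∈ A.commutant, ∃ z ∈ A, p * x * p = z * p) :
    ∃ ξ : H, ‖ξ‖ = 1 ∧ p ξ = ξ ∧
      ∀ x, p x ∈ (Submodule.span ℂ {y | ∃ a ∈ A, y = a ξ}).topologicalClosure := by
  have hpp : ∀ y, p (p y) = p y := fun y => congr($(hp.isIdempotentElem.eq) y)
  have hpa : ∀ a ∈ A, ∀ y, p (a y) = a (p y) := fun a ha y =>
    congr($(VonNeumannAlgebra.mem_commutant_iff.1 hpA a ha) y).symm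
  let u : ℕ → H := TopologicalSpace.denseSeq H
  let X : ℕ → Set H := fun n => {y | ∃ k < n, ∃ a ∈ A, y = a (p (u k))}
  let M : ℕ → Submodule ℂ H := fun n => (Submodule.span ℂ (X n)).topologicalClosure
  have hMc : ∀ n, CompleteSpace (M n) := fun n =>
    (Submodule.isClosed_topologicalClosure _).completeSpace_coe
  let R : ℕ → H →L[ℂ] H := fun n => (M n).starProjection
  have hxM : ∀ k n, k < n → p (u k) ∈ M n := fun k n h =>
    Submodule.le_topologicalClosure _ (Submodule.subset_span ⟨k, h, 1, one_mem A, rfl⟩)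
  have hMmono : ∀ j n, j ≤ n → M j ≤ M n := fun j n h =>
    Submodule.topologicalClosure_mono (Submodule.span_mono (by
      rintro _ ⟨k, hk, a, ha, rfl⟩
      exact ⟨k, hk.trans_le h, a, ha, rfl⟩))
  have hRA : ∀ n, R n ∈ A.commutant := fun n => by
    refine starProjection_mem A.commutant _ fun y hy x hx => ?_
    rw [A.commutant_commutant] at hy
    refine map_mem_closure_span y ?_ hx
    rintro _ ⟨k, hk, a, ha, rfl⟩
    exact Submodule.le_topologicalClosure _
      (Submodule.subset_span ⟨k, hk, y * a, mul_mem hy ha, rfl⟩)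
  have hMp : ∀ n, ∀ x ∈ M n, p x = x := fun n => by
    have hle : M n ≤ LinearMap.eqLocus (p : H →ₗ[ℂ] H) LinearMap.id := by
      refine Submodule.topologicalClosure_minimal _ (Submodule.span_le.2 ?_)
        (isClosed_eq p.continuous continuous_id)
      rintro _ ⟨k, hk, a, ha, rfl⟩
      change p (a (p (u k))) = a (p (u k))
      rw [hpa a ha, hpp]
    exact hle
  have hRmem : ∀ n x, R n x ∈ M n := fun n x => Submodule.starProjection_apply_mem _ x
  have hRfix : ∀ n, ∀ x ∈ M n, R n x = x := fun n x hx =>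
    Submodule.starProjection_eq_self_iff.2 hx
  have hRp : ∀ n, IsStarProjection (R n) := fun n => isStarProjection_starProjection
  have hpR : ∀ n, p * R n = R n := fun n => by
    ext x
    exact hMp n _ (hRmem n x)
  choose z hzA hz using fun n => hcorner (R n) (hRA n)
  have hzR : ∀ n y, p y = y → z n y = R n y := fun n y hy => by
    have h := congr($(hz n) y)
    rw [hpR, mul_apply_eq_comp, mul_apply_eq_comp, hy] at h
    exact h.symm
  let η : ℕ → H := fun n => p (u n) - R n (p (u n))
  have hpη : ∀ n, p (η n) = η n := fun n => by
    simp only [η, map_sub, hpp, hMp n _ (hRmem n _)]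
  have hRlow : ∀ j n, j ≤ n → R j (η n) = 0 := fun j n h => by
    have hjn : R j * R n = R j := starProj_mul_symm (hRp j) (hRp n) (by
      ext x
      exact hRfix n _ (hMmono j n h (hRmem j x)))
    have := congr($hjn (p (u n)))
    rw [mul_apply_eq_comp] at this
    simp only [η, map_sub, this, sub_self]
  have hRhigh : ∀ j n, n < j → R j (η n) = η n := fun j n h => by
    refine hRfix j _ (Submodule.sub_mem _ (hxM n j h) (hMmono n j h.le (hRmem n _)))
  -- Any nonzero weights making the series of the `ε n • η n` converge will do.
  let ε : ℕ → ℂ := fun n => (((1 / 2 : ℝ) ^ n / (1 + ‖η n‖) : ℝ) : ℂ)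
  have hε0 : ∀ n, ε n ≠ 0 := fun n => Complex.ofReal_ne_zero.2 (by positivity)
  have hsum : Summable fun n => ε n • η n := by
    refine Summable.of_norm_bounded (g := fun n : ℕ => (1 / 2 : ℝ) ^ n)
      (summable_geometric_of_lt_one (by norm_num) (by norm_num)) fun n => ?_
    rw [norm_smul, Complex.norm_real, Real.norm_of_nonneg (by positivity), div_mul_eq_mul_div]
    refine div_le_of_le_mul₀ (by positivity) (by positivity) ?_
    gcongr
    linarith
  obtain ⟨ζ, hζ⟩ := hsum
  have hpζ : p ζ = ζ := by
    have := hζ.mapL p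
    simp only [map_smul, hpη] at this
    exact this.unique hζ
  have hdiff : ∀ n, R (n + 1) ζ - R n ζ = ε n • η n := fun n => by
    have h1 := hζ.mapL (R (n + 1) - R n)
    have h2 : HasSum (fun k => (R (n + 1) - R n) (ε k • η k))
        ((R (n + 1) - R n) (ε n • η n)) := hasSum_single n fun k hk => by
      rw [map_smul, sub_apply]
      rcases lt_or_gt_of_ne hk with h | h
      · rw [hRhigh _ _ (by omega), hRhigh _ _ h, sub_self, smul_zero]
      · rw [hRlow _ _ (by omega), hRlow _ _ h.le, sub_self, smul_zero]
    have h3 := h1.unique h2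
    rw [map_smul, sub_apply, sub_apply, hRhigh _ _ (Nat.lt_succ_self n), hRlow _ _ le_rfl,
      sub_zero] at h3
    exact h3
  set N := (Submodule.span ℂ {y | ∃ a ∈ A, y = a ζ}).topologicalClosure with hN
  have haN : ∀ a ∈ A, ∀ x ∈ N, a x ∈ N := fun a ha x hx => by
    refine map_mem_closure_span a ?_ hx
    rintro _ ⟨b, hb, rfl⟩
    exact Submodule.le_topologicalClosure _ (Submodule.subset_span ⟨a * b, mul_mem ha hb, rfl⟩)
  have hηN : ∀ n, η n ∈ N := fun n => by
    have h1 : ε n • η n ∈ N := by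
      rw [← hdiff, ← hzR _ _ hpζ, ← hzR _ _ hpζ]
      exact Submodule.le_topologicalClosure _ (Submodule.subset_span
        ⟨z (n + 1) - z n, sub_mem (hzA _) (hzA _), rfl⟩)
    have := N.smul_mem (ε n)⁻¹ h1
    rwa [smul_smul, inv_mul_cancel₀ (hε0 n), one_smul] at this
  have hxN : ∀ n, p (u n) ∈ N := fun n => by
    induction n using Nat.strong_induction_on with
    | _ n ih =>
      have hMN : M n ≤ N := by
        refine Submodule.topologicalClosure_minimal _ (Submodule.span_le.2 ?_)
          (Submodule.isClosed_topologicalClosure _)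
        rintro _ ⟨k, hk, a, ha, rfl⟩
        exact haN a ha _ (ih k hk)
      have := N.add_mem (hηN n) (hMN (hRmem n (p (u n))))
      simpa only [η, sub_add_cancel] using this
  have hpN : ∀ x, p x ∈ N := fun x => by
    have hcl : IsClosed {x | p x ∈ N} :=
      (Submodule.isClosed_topologicalClosure _).preimage p.continuous
    refine closure_minimal ?_ hcl (TopologicalSpace.denseRange_denseSeq H x)
    rintro _ ⟨n, rfl⟩
    exact hxN n
  have hζ0 : ζ ≠ 0 := by
    rintro h0
    refine hp0 (ContinuousLinearMap.ext fun x => ?_)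
    have hle : N ≤ ⊥ := by
      refine Submodule.topologicalClosure_minimal _ (Submodule.span_le.2 ?_) ?_
      · rintro _ ⟨a, _, rfl⟩
        rw [h0, map_zero]
        exact zero_mem _
      · exact isClosed_singleton
    exact (Submodule.mem_bot ℂ).1 (hle (hpN x))
  have hnz : ((‖ζ‖ : ℝ) : ℂ) ≠ 0 := by exact_mod_cast norm_ne_zero_iff.2 hζ0
  refine ⟨((‖ζ‖ : ℝ) : ℂ)⁻¹ • ζ, ?_, ?_, fun x => ?_⟩
  · rw [norm_smul, norm_inv, Complex.norm_real, norm_norm,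
      inv_mul_cancel₀ (norm_ne_zero_iff.2 hζ0)]
  · rw [map_smul, hpζ]
  · refine Submodule.topologicalClosure_mono (Submodule.span_mono ?_) (hpN x)
    rintro _ ⟨a, ha, rfl⟩
    refine ⟨((‖ζ‖ : ℝ) : ℂ) • a, smul_mem A _ ha, ?_⟩
    rw [smul_apply, map_smul, smul_smul, mul_inv_cancel₀ hnz, one_smul]

/-- The orbits of a vector `ξ` under `A`, moved by operators `v i` of the commutant, decompose `H`
into `m` orthogonal copies of one cyclic representation of `A`: the `v i` are isometric on
`A ξ` and have orthogonal ranges, and their values on `A ξ` are total. Since the `v i`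
commute with `A`, it suffices to state the isometry at `ξ` itself. -/
structure IsCyclicSystem {m : ℕ} (A : VonNeumannAlgebra H) (v : Fin m → H →L[ℂ] H) (ξ : H) :
    Prop where
  mem : ∀ i, v i ∈ A.commutant
  orth : ∀ i j, i ≠ j → star (v i) * v j = 0
  isom : ∀ i, star (v i) (v i ξ) = ξ
  norm : ‖ξ‖ = 1
  total : ∀ x, x ∈ (Submodule.span ℂ {y | ∃ i, ∃ a ∈ A, y = v i (a ξ)}).topologicalClosure

/-- An isomorphism of the commutant with a matrix algebra over `A` transports the standard matrix
units to the commutant. The first column of matrix units, together with a cyclic vector for the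
corner of the first diagonal unit, forms a cyclic system. -/
lemma exists_cyclicSystem [TopologicalSpace.SeparableSpace H] [Nontrivial H] {m : ℕ} (hm : 0 < m)
    (hcomm : ∀ x ∈ A, ∀ y ∈ A, x * y = y * x)
    (φ : (A.commutant.toStarSubalgebra) ≃⋆ₐ[ℂ] Matrix (Fin m) (Fin m) A.toStarSubalgebra) :
    ∃ (v : Fin m → H →L[ℂ] H) (ξ : H), IsCyclicSystem A v ξ := by
  let o : Fin m := ⟨0, hm⟩
  have hinj : Function.Injective φ := EquivLike.injective φ
  let e : Fin m → Fin m → A.commutant.toStarSubalgebra := fun i j =>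
    φ.symm (Matrix.single i j 1)
  have he : ∀ i j, φ (e i j) = Matrix.single i j 1 := fun i j => φ.apply_symm_apply _
  have hmul : ∀ i j k, e i j * e j k = e i k := fun i j k => by
    apply hinj
    rw [map_mul, he, he, he, Matrix.single_mul_single_same, one_mul]
  have hmul0 : ∀ i j k l, j ≠ k → e i j * e k l = 0 := fun i j k l h => by
    apply hinj
    rw [map_mul, he, he, map_zero, Matrix.single_mul_single_of_ne _ _ _ _ h]
  have hstar : ∀ i j, star (e i j) = e j i := fun i j => by
    apply hinj
    rw [map_star, he, he, Matrix.star_eq_conjTranspose, Matrix.conjTranspose_single, star_one]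
  have hone : ∑ i, e i i = 1 := by
    apply hinj
    rw [map_sum, map_one]
    simp_rw [he]
    exact Matrix.sum_single_one
  have hmulH : ∀ i j k, (e i j : H →L[ℂ] H) * (e j k : H →L[ℂ] H) = e i k := fun i j k => by
    rw [← hmul i j k]; rfl
  have hstarH : ∀ i j, star (e i j : H →L[ℂ] H) = e j i := fun i j => by
    rw [← hstar i j]; rfl
  have hproj : IsStarProjection (e o o : H →L[ℂ] H) := ⟨hmulH o o o, hstarH o o⟩
  have h0 : (e o o : H →L[ℂ] H) ≠ 0 := fun h => by
    have h1 : e o o = 0 := Subtype.ext h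
    have h2 := he o o
    rw [h1, map_zero] at h2
    have h3 := congr($h2 o o)
    rw [Matrix.single_apply_same] at h3
    exact zero_ne_one (congrArg (Subtype.val) h3 : (0 : H →L[ℂ] H) = 1)
  have hcorner : ∀ x ∈ A.commutant, ∃ z ∈ A, (e o o : H →L[ℂ] H) * x * e o o = z * e o o := by
    intro x hx
    let x' : A.commutant.toStarSubalgebra := ⟨x, hx⟩
    let b := φ x' o o
    let z := φ.symm (Matrix.diagonal fun _ => b)
    refine ⟨z, mem_of_commute A fun y hy => ?_, ?_⟩
    · have : (⟨y, hy⟩ : A.commutant.toStarSubalgebra) * z = z * ⟨y, hy⟩ := by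
        apply hinj
        rw [map_mul, map_mul, φ.apply_symm_apply]
        ext i j : 2
        rw [Matrix.mul_diagonal, Matrix.diagonal_mul]
        exact hcomm _ (φ ⟨y, hy⟩ i j).2 _ b.2
      exact congrArg Subtype.val this
    · have : e o o * x' * e o o = z * e o o := by
        apply hinj
        rw [map_mul, map_mul, map_mul, he, φ.apply_symm_apply]
        ext i j : 2
        rw [Matrix.diagonal_mul, Matrix.single_mul_mul_single]
        simp only [Matrix.single_apply, one_mul, mul_one, b]
        split_ifs <;> simp
      exact congrArg Subtype.val this
  obtain ⟨ξ, hξ1, hξp, hξ⟩ := exists_cyclic (e o o).2 hproj h0 hcorner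
  refine ⟨fun i => e i o, ξ, fun i => (e i o).2, fun i j h => ?_, fun i => ?_, hξ1, fun x => ?_⟩
  · rw [hstarH]
    exact congrArg Subtype.val (hmul0 o i j o h)
  · rw [hstarH, ← mul_apply_eq_comp, hmulH, hξp]
  · have hx : x = ∑ i, (e i o : H →L[ℂ] H) ((e o i : H →L[ℂ] H) x) := by
      have h1 := congr(($hone : H →L[ℂ] H) x)
      simp_rw [← mul_apply_eq_comp, hmulH]
      rw [AddSubmonoidClass.coe_finsetSum, sum_apply] at h1
      exact h1.symm
    rw [hx]
    refine Submodule.sum_mem _ fun i _ => map_mem_closure_span (e i o : H →L[ℂ] H) ?_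
      (X := {y | ∃ a ∈ A, y = a ξ}) ?_
    · rintro _ ⟨a, ha, rfl⟩
      exact Submodule.le_topologicalClosure _ (Submodule.subset_span ⟨i, a, ha, rfl⟩)
    · have := hξ ((e o i : H →L[ℂ] H) x)
      rwa [← mul_apply_eq_comp, hmulH] at this

lemma IsCyclicSystem.separating (hcomm : ∀ x ∈ A, ∀ y ∈ A, x * y = y * x) {m : ℕ}
    {v : Fin m → H →L[ℂ] H} {ξ : H} (h : IsCyclicSystem A v ξ) {a : H →L[ℂ] H} (ha : a ∈ A)
    (h0 : a ξ = 0) : a = 0 := by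
  ext x
  have hle : (Submodule.span ℂ {y | ∃ i, ∃ a ∈ A, y = v i (a ξ)}).topologicalClosure ≤
      LinearMap.ker (a : H →ₗ[ℂ] H) := by
    refine Submodule.topologicalClosure_minimal _ (Submodule.span_le.2 ?_)
      (ContinuousLinearMap.isClosed_ker a)
    rintro _ ⟨i, b, hb, rfl⟩
    change a (v i (b ξ)) = 0
    have hv := VonNeumannAlgebra.mem_commutant_iff.1 (h.mem i) a ha
    rw [← mul_apply_eq_comp, hv, mul_apply_eq_comp, ← mul_apply_eq_comp a b, hcomm a ha b hb,
      mul_apply_eq_comp, h0, map_zero, map_zero]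
  exact hle (h.total x)

/-! ### The resolution generates the algebra -/

/-- An operator commuting with a uniform resolution commutes with the whole algebra. By normality,
`s n ξ → a ξ` forces `star (s n) ξ → star a ξ`, and this turns the approximation of `a` by the
span of `E` on the vector `ξ` into convergence of matrix coefficients over a total set. -/
lemma IsCyclicSystem.commute_of_commute (hcomm : ∀ x ∈ A, ∀ y ∈ A, x * y = y * x) {m : ℕ}
    {v : Fin m → H →L[ℂ] H} {ξ : H} (h : IsCyclicSystem A v ξ) {E : unitInterval → H →L[ℂ] H}
    (hE : IsUniformResolution A ξ E) {T : H →L[ℂ] H} (hT : ∀ t, T * E t = E t * T)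
    {a : H →L[ℂ] H} (ha : a ∈ A) : T * a = a * T := by
  have hadj : ∀ (b : H →L[ℂ] H) x y, ⟪b x, y⟫_ℂ = ⟪x, star b y⟫_ℂ := fun b x y =>
    (ContinuousLinearMap.adjoint_inner_right b x y).symm
  have hnormal : ∀ b ∈ A, ‖star b ξ‖ = ‖b ξ‖ := fun b hb => by
    have h1 : ⟪star b ξ, star b ξ⟫_ℂ = ⟪b ξ, b ξ⟫_ℂ := by
      rw [hadj b, ← mul_apply_eq_comp, hcomm _ (star_mem hb) _ hb, hadj (star b), star_star,
        mul_apply_eq_comp]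
    rw [inner_self_eq_norm_sq_to_K, inner_self_eq_norm_sq_to_K] at h1
    have h2 : ‖star b ξ‖ ^ 2 = ‖b ξ‖ ^ 2 := by exact_mod_cast h1
    exact (pow_left_inj₀ (norm_nonneg _) (norm_nonneg _) two_ne_zero).1 h2
  -- a sequence in the span of `E` approximating `a` on `ξ`
  obtain ⟨s, hs, hlim⟩ : ∃ s : ℕ → H →L[ℂ] H, (∀ n, s n ∈ Submodule.span ℂ (Set.range E)) ∧
      Filter.Tendsto (fun n => s n ξ) Filter.atTop (nhds (a ξ)) := by
    obtain ⟨y, hy, hlim⟩ := mem_closure_iff_seq_limit.1 (hE.dense a ha)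
    have hmap : ∀ n, ∃ s ∈ Submodule.span ℂ (Set.range E), s ξ = y n := fun n => by
      have h1 : Submodule.span ℂ {x | ∃ t, x = E t ξ} ≤ (Submodule.span ℂ (Set.range E)).map
          (ContinuousLinearMap.apply ℂ H ξ : (H →L[ℂ] H) →ₗ[ℂ] H) := by
        refine Submodule.span_le.2 ?_
        rintro _ ⟨t, rfl⟩
        exact ⟨E t, Submodule.subset_span ⟨t, rfl⟩, rfl⟩
      exact h1 (hy n)
    choose s hs hsy using hmap
    exact ⟨s, hs, by simpa only [hsy] using hlim⟩
  have hsA : ∀ n, s n ∈ A := fun n => by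
    have hle : Submodule.span ℂ (Set.range E) ≤ Subalgebra.toSubmodule A.toSubalgebra :=
      Submodule.span_le.2 (by rintro _ ⟨t, rfl⟩; exact hE.mem t)
    exact hle (hs n)
  have hsT : ∀ n, T * s n = s n * T := fun n => by
    have hle : Submodule.span ℂ (Set.range E) ≤
        Subalgebra.toSubmodule (Subalgebra.centralizer ℂ {T}) :=
      Submodule.span_le.2 (by
        rintro _ ⟨t, rfl⟩
        exact Subalgebra.mem_centralizer_iff ℂ |>.2 (by rintro _ rfl; exact hT t))
    exact Subalgebra.mem_centralizer_iff ℂ |>.1 (hle (hs n)) T rfl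
  have hlim_star : Filter.Tendsto (fun n => star (s n) ξ) Filter.atTop (nhds (star a ξ)) := by
    rw [tendsto_iff_norm_sub_tendsto_zero] at hlim ⊢
    refine hlim.congr fun n => ?_
    rw [← sub_apply, ← sub_apply, ← star_sub, hnormal _ (sub_mem (hsA n) ha)]
  have hmove : ∀ b ∈ A, ∀ c ∈ A, ∀ i, c (v i (b ξ)) = v i (b (c ξ)) := fun b hb c hc i => by
    have hv := VonNeumannAlgebra.mem_commutant_iff.1 (h.mem i) c hc
    rw [← mul_apply_eq_comp, hv, mul_apply_eq_comp, ← mul_apply_eq_comp c b, hcomm c hc b hb,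
      mul_apply_eq_comp]
  have key : ∀ i, ∀ b ∈ A, ∀ j, ∀ c ∈ A,
      ⟪v j (c ξ), T (a (v i (b ξ)))⟫_ℂ = ⟪v j (c ξ), a (T (v i (b ξ)))⟫_ℂ := by
    intro i b hb j c hc
    have h1 : Filter.Tendsto (fun n => ⟪v j (c ξ), T (s n (v i (b ξ)))⟫_ℂ) Filter.atTop
        (nhds ⟪v j (c ξ), T (a (v i (b ξ)))⟫_ℂ) := by
      simp only [hmove b hb a ha, hmove b hb _ (hsA _)]
      exact tendsto_const_nhds.inner (((T * v i * b).continuous.tendsto _).comp hlim)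
    have h2 : Filter.Tendsto (fun n => ⟪star (s n) (v j (c ξ)), T (v i (b ξ))⟫_ℂ) Filter.atTop
        (nhds ⟪star a (v j (c ξ)), T (v i (b ξ))⟫_ℂ) := by
      simp only [hmove c hc _ (star_mem ha), hmove c hc _ (star_mem (hsA _))]
      exact (((v j * c).continuous.tendsto _).comp hlim_star).inner tendsto_const_nhds
    simp only [hadj (star _), star_star] at h2
    refine tendsto_nhds_unique (h1.congr fun n => ?_) h2
    rw [← mul_apply_eq_comp T, hsT, mul_apply_eq_comp]
  have hclosed : ∀ i, ∀ b ∈ A, (T * a) (v i (b ξ)) = (a * T) (v i (b ξ)) := by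
    intro i b hb
    rw [← sub_eq_zero, ← sub_apply, ← inner_self_eq_zero (𝕜 := ℂ)]
    set w := (T * a - a * T) (v i (b ξ)) with hw
    have hle : (Submodule.span ℂ {y | ∃ j, ∃ c ∈ A, y = v j (c ξ)}).topologicalClosure ≤
        (ℂ ∙ w)ᗮ := by
      refine Submodule.topologicalClosure_minimal _ (Submodule.span_le.2 ?_)
        (Submodule.isClosed_orthogonal _)
      rintro _ ⟨j, c, hc, rfl⟩
      refine Submodule.mem_orthogonal_singleton_iff_inner_left.2 ?_
      rw [hw, sub_apply, inner_sub_right, sub_eq_zero]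
      exact key i b hb j c hc
    exact Submodule.mem_orthogonal_singleton_iff_inner_left.1 (hle (h.total w))
  ext x
  have hle : (Submodule.span ℂ {y | ∃ i, ∃ b ∈ A, y = v i (b ξ)}).topologicalClosure ≤
      LinearMap.eqLocus (T * a : H →L[ℂ] H).toLinearMap (a * T : H →L[ℂ] H).toLinearMap := by
    refine Submodule.topologicalClosure_minimal _ (Submodule.span_le.2 ?_)
      (isClosed_eq (T * a).continuous (a * T).continuous)
    rintro _ ⟨i, b, hb, rfl⟩
    exact hclosed i b hb
  exact hle (h.total x)

lemma IsCyclicSystem.dense_range {m : ℕ}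
    {v : Fin m → H →L[ℂ] H} {ξ : H} (h : IsCyclicSystem A v ξ) {E : unitInterval → H →L[ℂ] H}
    (hE : IsUniformResolution A ξ E) :
    DenseRange (Finsupp.linearCombination ℂ fun k : unitInterval × Fin m => E k.1 (v k.2 ξ)) := by
  intro x
  rw [← LinearMap.coe_range, Finsupp.range_linearCombination, ← Submodule.topologicalClosure_coe]
  refine Submodule.topologicalClosure_minimal _ (Submodule.span_le.2 ?_)
    (Submodule.isClosed_topologicalClosure _) (h.total x)
  rintro _ ⟨i, a, ha, rfl⟩
  refine map_mem_closure_span (v i) ?_ (hE.dense a ha)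
  rintro _ ⟨t, rfl⟩
  refine Submodule.le_topologicalClosure _ (Submodule.subset_span ⟨(t, i), ?_⟩)
  exact congr($(VonNeumannAlgebra.mem_commutant_iff.1 (h.mem i) _ (hE.mem t)) ξ)

/-! ### The intertwining unitary -/

/-- The Gram matrix of the total family `E t (v i ξ)` does not depend on the algebra. -/
lemma IsCyclicSystem.gram {m : ℕ}
    {v : Fin m → H →L[ℂ] H} {ξ : H} (h : IsCyclicSystem A v ξ) {E : unitInterval → H →L[ℂ] H}
    (hE : IsUniformResolution A ξ E) (s t : unitInterval) (i j : Fin m) :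
    ⟪E s (v i ξ), E t (v j ξ)⟫_ℂ = if i = j then (((min s t : unitInterval) : ℝ) : ℂ) else 0 := by
  have hv : ∀ t i, E t (v i ξ) = v i (E t ξ) := fun t i =>
    congr($(VonNeumannAlgebra.mem_commutant_iff.1 (h.mem i) _ (hE.mem t)) ξ)
  have h1 : ⟪E s (v i ξ), E t (v j ξ)⟫_ℂ = ⟪ξ, E (min s t) ((star (v i) * v j) ξ)⟫_ℂ := by
    have hst : star (v i) ∈ A.commutant := star_mem (h.mem i)
    rw [starProj_inner (hE.proj s), ← mul_apply_eq_comp, hE.mul,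
      ← ContinuousLinearMap.adjoint_inner_right (v i)]
    exact congrArg (fun x => ⟪ξ, x⟫_ℂ)
      congr($(VonNeumannAlgebra.mem_commutant_iff.1 hst _ (hE.mem (min s t))) (v j ξ)).symm
  rw [h1]
  split_ifs with hij
  · subst hij
    rw [mul_apply_eq_comp, h.isom]
    have h2 : E (min s t) ξ = E (min s t) (E (min s t) ξ) :=
      congr($((hE.proj (min s t)).isIdempotentElem.eq) ξ).symm
    rw [h2, ← starProj_inner (hE.proj _), inner_self_eq_norm_sq_to_K]
    rw [← hE.norm_sq (min s t)]
    norm_cast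
  · rw [h.orth i j hij, zero_apply, map_zero, inner_zero_right]

/-- A unitary intertwining the two uniform resolutions: it matches the two total families with
equal Gram matrices. -/
lemma exists_intertwining_unitary {m : ℕ} {A₁ A₂ : VonNeumannAlgebra H}
    {v₁ v₂ : Fin m → H →L[ℂ] H} {ξ₁ ξ₂ : H} (h₁ : IsCyclicSystem A₁ v₁ ξ₁)
    (h₂ : IsCyclicSystem A₂ v₂ ξ₂) {E₁ E₂ : unitInterval → H →L[ℂ] H}
    (hE₁ : IsUniformResolution A₁ ξ₁ E₁) (hE₂ : IsUniformResolution A₂ ξ₂ E₂) :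
    ∃ U ∈ unitary (H →L[ℂ] H), ∀ t, U * E₁ t = E₂ t * U := by
  set w₁ := fun k : unitInterval × Fin m => E₁ k.1 (v₁ k.2 ξ₁) with hw₁
  set w₂ := fun k : unitInterval × Fin m => E₂ k.1 (v₂ k.2 ξ₂) with hw₂
  have hnorm : ∀ x, ‖Finsupp.linearCombination ℂ w₂ (LinearEquiv.refl ℂ _ x)‖ =
      ‖Finsupp.linearCombination ℂ w₁ x‖ := by
    intro x
    have hin : ⟪Finsupp.linearCombination ℂ w₂ x, Finsupp.linearCombination ℂ w₂ x⟫_ℂ =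
        ⟪Finsupp.linearCombination ℂ w₁ x, Finsupp.linearCombination ℂ w₁ x⟫_ℂ := by
      simp only [Finsupp.linearCombination_apply, Finsupp.sum, sum_inner, inner_sum,
        inner_smul_left, inner_smul_right, hw₁, hw₂, h₁.gram hE₁, h₂.gram hE₂]
    rw [inner_self_eq_norm_sq_to_K, inner_self_eq_norm_sq_to_K] at hin
    have h2 : ‖Finsupp.linearCombination ℂ w₂ x‖ ^ 2 = ‖Finsupp.linearCombination ℂ w₁ x‖ ^ 2 := by
      exact_mod_cast hin
    exact (pow_left_inj₀ (norm_nonneg _) (norm_nonneg _) two_ne_zero).1 h2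
  let V : H ≃ₗᵢ[ℂ] H := (LinearEquiv.refl ℂ (unitInterval × Fin m →₀ ℂ)).extendOfIsometry _ _
    (h₁.dense_range hE₁) (h₂.dense_range hE₂) hnorm
  have hV : ∀ k, V (w₁ k) = w₂ k := fun k => by
    have := LinearEquiv.extendOfIsometry_eq (LinearEquiv.refl ℂ (unitInterval × Fin m →₀ ℂ)) _ _
      (h₁.dense_range hE₁) (h₂.dense_range hE₂) hnorm (Finsupp.single k 1)
    simpa using this
  refine ⟨V.toContinuousLinearEquiv, ?_, fun t => ?_⟩
  · exact (Unitary.linearIsometryEquiv.symm V).2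
  · refine ContinuousLinearMap.ext fun x => ?_
    refine congrFun (DenseRange.equalizer (h₁.dense_range hE₁) (ContinuousLinearMap.continuous _)
      (ContinuousLinearMap.continuous _) (funext fun y => ?_)) x
    change V (E₁ t (Finsupp.linearCombination ℂ w₁ y)) =
      E₂ t (V (Finsupp.linearCombination ℂ w₁ y))
    simp only [Finsupp.linearCombination_apply, Finsupp.sum, map_sum, map_smul, hV]
    refine Finset.sum_congr rfl fun k _ => ?_
    have e₁ : E₁ t (w₁ k) = w₁ (min t k.1, k.2) := congr($(hE₁.mul t k.1) _)
    have e₂ : E₂ t (w₂ k) = w₂ (min t k.1, k.2) := congr($(hE₂.mul t k.1) _)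
    rw [e₁, e₂, hV]

/-! ### Conjugation of the algebras -/

lemma star_mul_eq_mul_star {U S T : H →L[ℂ] H} (hU : U ∈ unitary (H →L[ℂ] H))
    (h : U * S = T * U) : star U * T = S * star U := by
  calc star U * T = star U * (T * U) * star U := by
        rw [mul_assoc, mul_assoc, (Unitary.mem_iff.1 hU).2, mul_one]
    _ = S * star U := by rw [← h, ← mul_assoc, (Unitary.mem_iff.1 hU).1, one_mul]

/-- A unitary intertwining the resolutions carries one algebra into the other, because each
algebra is the bicommutant of its resolution. -/
lemma conj_mem {m : ℕ} {A₁ A₂ : VonNeumannAlgebra H}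
    (hcomm : ∀ x ∈ A₁, ∀ y ∈ A₁, x * y = y * x)
    {v₁ : Fin m → H →L[ℂ] H} {ξ₁ ξ₂ : H} (h₁ : IsCyclicSystem A₁ v₁ ξ₁)
    {E₁ E₂ : unitInterval → H →L[ℂ] H}
    (hE₁ : IsUniformResolution A₁ ξ₁ E₁) (hE₂ : IsUniformResolution A₂ ξ₂ E₂)
    {U : H →L[ℂ] H} (hU : U ∈ unitary (H →L[ℂ] H)) (hUE : ∀ t, U * E₁ t = E₂ t * U)
    {a : H →L[ℂ] H} (ha : a ∈ A₁) : U * a * star U ∈ A₂ := by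
  have hu' : U * star U = 1 := (Unitary.mem_iff.1 hU).2
  have hUE' := fun t => star_mul_eq_mul_star hU (hUE t)
  refine mem_of_commute A₂ fun y hy => ?_
  have hT : ∀ t, star U * y * U * E₁ t = E₁ t * (star U * y * U) := fun t => by
    have hyE := VonNeumannAlgebra.mem_commutant_iff.1 hy _ (hE₂.mem t)
    calc star U * y * U * E₁ t = star U * (y * E₂ t) * U := by
          rw [mul_assoc, hUE]; simp only [mul_assoc]
      _ = (star U * E₂ t) * y * U := by rw [← hyE]; simp only [mul_assoc]
      _ = E₁ t * (star U * y * U) := by rw [hUE']; simp only [mul_assoc]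
  have hc := h₁.commute_of_commute hcomm hE₁ hT ha
  calc y * (U * a * star U) = (U * star U) * y * (U * a * star U) := by rw [hu', one_mul]
    _ = U * (star U * y * U * a) * star U := by simp only [mul_assoc]
    _ = U * (a * (star U * y * U)) * star U := by rw [hc]
    _ = U * a * star U * y * (U * star U) := by simp only [mul_assoc]
    _ = U * a * star U * y := by rw [hu', mul_one]

end VNUnique

/-- Von Neumann's uniqueness theorem: on an infinite-dimensional separable complex Hilbert
space, a commutative von Neumann algebra with no minimal projection whose commutant is
*-isomorphic to `m × m` matrices over it is unique up to unitary equivalence. -/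
theorem vonNeumann_unique_continuum
    (H : Type*) [NormedAddCommGroup H] [InnerProductSpace ℂ H] [CompleteSpace H]
    [TopologicalSpace.SeparableSpace H] (hinf : ¬ FiniteDimensional ℂ H)
    (m : ℕ) (hm : 0 < m) (A₁ A₂ : VonNeumannAlgebra H)
    (hcomm₁ : ∀ x ∈ A₁, ∀ y ∈ A₁, x * y = y * x)
    (hcomm₂ : ∀ x ∈ A₂, ∀ y ∈ A₂, x * y = y * x)
    (hmin₁ : ¬ ∃ p, A₁.IsMinimalProjection p)
    (hmin₂ : ¬ ∃ p, A₂.IsMinimalProjection p)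
    (hiso₁ : Nonempty ((A₁.commutant.toStarSubalgebra) ≃⋆ₐ[ℂ]
      Matrix (Fin m) (Fin m) A₁.toStarSubalgebra))
    (hiso₂ : Nonempty ((A₂.commutant.toStarSubalgebra) ≃⋆ₐ[ℂ]
      Matrix (Fin m) (Fin m) A₂.toStarSubalgebra)) :
    ∃ U : H →L[ℂ] H, U ∈ unitary (H →L[ℂ] H) ∧
      (fun a => U * a * star U) '' (A₁ : Set (H →L[ℂ] H)) = (A₂ : Set (H →L[ℂ] H)) := by
  have : Nontrivial H := not_subsingleton_iff_nontrivial.1 fun _ => hinf inferInstance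
  obtain ⟨φ₁⟩ := hiso₁
  obtain ⟨φ₂⟩ := hiso₂
  obtain ⟨v₁, ξ₁, h₁⟩ := VNUnique.exists_cyclicSystem hm hcomm₁ φ₁
  obtain ⟨v₂, ξ₂, h₂⟩ := VNUnique.exists_cyclicSystem hm hcomm₂ φ₂
  obtain ⟨E₁, hE₁⟩ := VNUnique.exists_uniformResolution hcomm₁ hmin₁ h₁.norm
    fun a ha => h₁.separating hcomm₁ ha
  obtain ⟨E₂, hE₂⟩ := VNUnique.exists_uniformResolution hcomm₂ hmin₂ h₂.norm
    fun a ha => h₂.separating hcomm₂ ha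
  obtain ⟨U, hU, hUE⟩ := VNUnique.exists_intertwining_unitary h₁ h₂ hE₁ hE₂
  have hu' : U * star U = 1 := (Unitary.mem_iff.1 hU).2
  have hUE' := fun t => VNUnique.star_mul_eq_mul_star hU (hUE t)
  refine ⟨U, hU, Set.Subset.antisymm ?_ fun b hb => ?_⟩
  · rintro _ ⟨a, ha, rfl⟩
    exact VNUnique.conj_mem hcomm₁ h₁ hE₁ hE₂ hU hUE ha
  · have := VNUnique.conj_mem hcomm₂ h₂ hE₂ hE₁ (Unitary.star_mem hU) hUE' hb
    rw [star_star] at this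
    refine ⟨star U * b * U, this, ?_⟩
    change U * (star U * b * U) * star U = b
    calc U * (star U * b * U) * star U = (U * star U) * b * (U * star U) := by
          simp only [mul_assoc]
      _ = b := by rw [hu', one_mul, mul_one]
end

section
/- Let H be an infinite-dimensional separable complex Hilbert space and m a positive integer. Then there exists a commutative von Neumann subalgebra A of B(H) such that A contains no minimal projection and the commutant of A in B(H) is *-isomorphic to the algebra of m×m matrices with entries in A. -/
open scoped InnerProductSpace

set_option linter.unusedSectionVars false

/-! ### Matrix units -/

section MatrixUnits

variable {R : Type*} [Ring R] [StarRing R] [Algebra ℂ R] [StarModule ℂ R] {m : ℕ}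

/-- `e` is a system of `m × m` matrix units of the star ring `R`: the relations
`e i j * e k l = δ_{jk} e i l`, `∑ i, e i i = 1`, `(e i j)⋆ = e j i` hold. -/
structure IsMatrixUnits (e : Fin m → Fin m → R) : Prop where
  mul : ∀ i j k l, e i j * e k l = if j = k then e i l else 0
  sum : ∑ i, e i i = 1
  star_eq : ∀ i j, star (e i j) = e j i

/-- The `(i, j)` matrix coefficient `∑ k, e k i * b * e j k` of `b` with respect to `e`. For matrix
units `e` it commutes with every `e p q`, and `b = ∑ i, ∑ j, matCoeff e b i j * e i j`. -/
def matCoeff (e : Fin m → Fin m → R) (b : R) (i j : Fin m) : R := ∑ k, e k i * b * e j k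

namespace IsMatrixUnits

theorem unit_mul_matCoeff {e : Fin m → Fin m → R} (he : IsMatrixUnits e) (b : R)
    (i j p q : Fin m) : e p q * matCoeff e b i j = e p i * b * e j q := by
  simp [matCoeff, Finset.mul_sum, ← mul_assoc, he.mul, ite_mul]

theorem matCoeff_mul_unit {e : Fin m → Fin m → R} (he : IsMatrixUnits e) (b : R)
    (i j p q : Fin m) : matCoeff e b i j * e p q = e p i * b * e j q := by
  simp [matCoeff, Finset.sum_mul, mul_assoc, he.mul]

theorem matCoeff_mul {e : Fin m → Fin m → R} (he : IsMatrixUnits e) (b c : R)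
    (i l : Fin m) : matCoeff e (b * c) i l = ∑ j, matCoeff e b i j * matCoeff e c j l := by
  have h (j : Fin m) : matCoeff e b i j * matCoeff e c j l
      = ∑ k, e k i * b * e j j * c * e l k := by
    conv_lhs => rw [matCoeff, Finset.sum_mul]
    refine Finset.sum_congr rfl fun k _ => ?_
    rw [mul_assoc, he.unit_mul_matCoeff]
    simp only [mul_assoc]
  simp_rw [h]
  rw [Finset.sum_comm]
  refine Finset.sum_congr rfl fun k _ => ?_
  rw [← Finset.sum_mul, ← Finset.sum_mul, ← Finset.mul_sum, he.sum]
  simp only [mul_assoc, one_mul]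

theorem sum_matCoeff_mul {e : Fin m → Fin m → R} (he : IsMatrixUnits e) (b : R) :
    ∑ i, ∑ j, matCoeff e b i j * e i j = b := by
  simp_rw [he.matCoeff_mul_unit, mul_assoc, ← Finset.mul_sum, ← Finset.sum_mul, he.sum]
  simp

theorem matCoeff_sum {e : Fin m → Fin m → R} (he : IsMatrixUnits e) (M : Fin m → Fin m → R)
    (hM : ∀ i j p q, Commute (e p q) (M i j)) (i j : Fin m) :
    matCoeff e (∑ p, ∑ q, M p q * e p q) i j = M i j := by
  have h (k p q : Fin m) : e k i * (M p q * e p q) * e j k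
      = if i = p then if q = j then M p q * e k k else 0 else 0 := by
    rw [← mul_assoc, (hM p q k i).eq, mul_assoc, mul_assoc, he.mul p q, mul_ite, mul_zero,
      mul_ite, mul_zero, he.mul k i]
    split_ifs <;> simp
  simp_rw [matCoeff, Finset.mul_sum, Finset.sum_mul, h]
  simp [← Finset.mul_sum, he.sum]

theorem star_matCoeff {e : Fin m → Fin m → R} (he : IsMatrixUnits e) (b : R) (i j : Fin m) :
    star (matCoeff e b i j) = matCoeff e (star b) j i := by
  simp [matCoeff, he.star_eq, mul_assoc]

theorem matCoeff_mem {e : Fin m → Fin m → R} {B : StarSubalgebra ℂ R} (hB : ∀ i j, e i j ∈ B)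
    {b : R} (hb : b ∈ B) (i j : Fin m) : matCoeff e b i j ∈ B :=
  sum_mem fun k _ => mul_mem (mul_mem (hB k i) hb) (hB j k)

/-- A star algebra `B` containing a system of matrix units `e` is the algebra of `m × m` matrices
over the relative commutant `A` of `e` in `B`, through the matrix coefficients. -/
def starAlgEquiv {e : Fin m → Fin m → R} (he : IsMatrixUnits e) (A B : StarSubalgebra ℂ R)
    (hB : ∀ i j, e i j ∈ B) (hA : ∀ a, a ∈ A ↔ a ∈ B ∧ ∀ i j, Commute (e i j) a) :
    B ≃⋆ₐ[ℂ] Matrix (Fin m) (Fin m) A where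
  toFun b := Matrix.of fun i j => ⟨matCoeff e b i j, (hA _).2 ⟨matCoeff_mem hB b.2 i j,
    fun p q => by rw [Commute, SemiconjBy, he.unit_mul_matCoeff, he.matCoeff_mul_unit]⟩⟩
  invFun M := ⟨∑ i, ∑ j, (M i j : R) * e i j, sum_mem fun i _ => sum_mem fun j _ =>
    mul_mem ((hA _).1 (M i j).2).1 (hB i j)⟩
  left_inv b := Subtype.ext (he.sum_matCoeff_mul b)
  right_inv M := by
    ext i j
    exact he.matCoeff_sum (fun i j => (M i j : R)) (fun i j p q => ((hA _).1 (M i j).2).2 p q) i j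
  map_mul' b c := by
    ext i j
    simp [Matrix.mul_apply, he.matCoeff_mul]
  map_add' b c := by
    ext i j
    simp [matCoeff, mul_add, add_mul, Finset.sum_add_distrib]
  map_star' b := by
    ext i j
    simp [Matrix.star_apply, he.star_matCoeff]
  map_smul' r b := by
    ext i j
    simp [matCoeff, Finset.smul_sum]

end IsMatrixUnits
end MatrixUnits

/-! ### Partial isometries permuting a Hilbert basis -/

section BasisOperators

variable {H : Type*} [NormedAddCommGroup H] [InnerProductSpace ℂ H] [CompleteSpace H]
  {ι κ : Type*}

theorem HilbertBasis.clm_ext (b : HilbertBasis ι ℂ H) {S T : H →L[ℂ] H}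
    (h : ∀ i, S (b i) = T (b i)) : S = T :=
  ContinuousLinearMap.ext_on (Submodule.dense_iff_topologicalClosure_eq_top.2 b.dense_span)
    (by rintro _ ⟨i, rfl⟩; exact h i)

theorem HilbertBasis.ext_inner (b : HilbertBasis ι ℂ H) {x y : H}
    (h : ∀ i, ⟪b i, x⟫_ℂ = ⟪b i, y⟫_ℂ) : x = y :=
  b.repr.injective <| by ext i; simpa [b.repr_apply_apply] using h i

/-- The isometry `ℓ²(κ) → H` that carries the `k`-th standard basis vector to `b (f k)`. -/
noncomputable def HilbertBasis.embed (b : HilbertBasis ι ℂ H) (f : κ ↪ ι) :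
    lp (fun _ : κ => ℂ) 2 →L[ℂ] H :=
  ((b.orthonormal.comp f f.injective).orthogonalFamily).linearIsometry.toContinuousLinearMap

theorem HilbertBasis.embed_single [DecidableEq κ] (b : HilbertBasis ι ℂ H) (f : κ ↪ ι) (k : κ) :
    b.embed f (lp.single 2 k 1) = b (f k) := by
  simp [embed, LinearIsometry.toSpanSingleton_apply]

theorem HilbertBasis.adjoint_embed_apply [DecidableEq ι] (b : HilbertBasis ι ℂ H) (f : κ ↪ ι) (i : ι)
    (k : κ) :
    (b.embed f).adjoint (b i) k = if f k = i then 1 else 0 := by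
  classical
  have := lp.inner_single_left (𝕜 := ℂ) k (1 : ℂ) ((b.embed f).adjoint (b i))
  rw [ContinuousLinearMap.adjoint_inner_right, b.embed_single,
    orthonormal_iff_ite.1 b.orthonormal] at this
  simpa using this.symm

/-- The partial isometry of `H` with `b (g k) ↦ b (f k)` for all `k` and `b i ↦ 0` for `i` outside
the range of `g`. Its adjoint is obtained by exchanging `f` and `g`. -/
noncomputable def HilbertBasis.transfer (b : HilbertBasis ι ℂ H) (f g : κ ↪ ι) : H →L[ℂ] H :=
  b.embed f ∘L (b.embed g).adjoint

theorem HilbertBasis.transfer_apply (b : HilbertBasis ι ℂ H) (f g : κ ↪ ι) (k : κ) :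
    b.transfer f g (b (g k)) = b (f k) := by
  classical
  have : (b.embed g).adjoint (b (g k)) = lp.single 2 k 1 := by
    ext l
    rw [b.adjoint_embed_apply]
    simp [Pi.single_apply]
  simp [transfer, this, b.embed_single]

theorem HilbertBasis.transfer_apply_of_notMem (b : HilbertBasis ι ℂ H) (f g : κ ↪ ι) {i : ι}
    (hi : ∀ k, g k ≠ i) : b.transfer f g (b i) = 0 := by
  classical
  have : (b.embed g).adjoint (b i) = 0 := by
    ext l
    rw [b.adjoint_embed_apply]
    simp [hi]
  simp [transfer, this]

theorem HilbertBasis.star_transfer (b : HilbertBasis ι ℂ H) (f g : κ ↪ ι) :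
    star (b.transfer f g) = b.transfer g f := by
  simp [transfer, ContinuousLinearMap.star_eq_adjoint, ContinuousLinearMap.adjoint_comp]

/-- Members of a Hilbert basis are at distance `√2` from each other, so in a separable space any
Hilbert basis is countable and can be reindexed by any countably infinite type. -/
theorem exists_hilbertBasis_of_infinite [TopologicalSpace.SeparableSpace H]
    (hinf : ¬ FiniteDimensional ℂ H) (ι : Type*) [Countable ι] [Infinite ι] :
    Nonempty (HilbertBasis ι ℂ H) := by
  obtain ⟨w, b, -⟩ := exists_hilbertBasis ℂ H
  have hw : Infinite w := by
    by_contra h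
    rw [not_infinite_iff_finite] at h
    have := Fintype.ofFinite w
    exact hinf (b.toOrthonormalBasis.toBasis.finiteDimensional_of_finite)
  have hc : Countable w := by
    refine Pairwise.countable_of_isOpen_disjoint (s := fun i => Metric.ball (b i) (1 / 2))
      (fun i j hij => Metric.ball_disjoint_ball ?_) (fun i => Metric.isOpen_ball)
      (fun i => ⟨b i, Metric.mem_ball_self (by norm_num)⟩)
    have h2 : ‖b i - b j‖ ^ 2 = 2 := by
      have := @norm_sub_sq ℂ H _ _ _ (b i) (b j)
      rw [b.orthonormal.2 hij, b.orthonormal.1, b.orthonormal.1] at this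
      rw [this]; norm_num
    rw [dist_eq_norm]
    nlinarith [norm_nonneg (b i - b j)]
  obtain ⟨φ⟩ := nonempty_equiv_of_countable (α := ι) (β := w)
  refine ⟨HilbertBasis.mk (b.orthonormal.comp φ φ.injective) ?_⟩
  rw [φ.surjective.range_comp, b.dense_span]

end BasisOperators

/-! ### The group von Neumann algebra with multiplicity -/

section Construction

variable {H : Type*} [NormedAddCommGroup H] [InnerProductSpace ℂ H] [CompleteSpace H]
  {G : Type*} [AddCommGroup G] {m : ℕ} (b : HilbertBasis (G × Fin m) ℂ H)

/-- Translation by `g` in the first coordinate. -/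
def shiftEmb (m : ℕ) (g : G) : G × Fin m ↪ G × Fin m :=
  ⟨fun x => (g + x.1, x.2), fun x y h => by simpa [Prod.ext_iff] using h⟩

/-- The inclusion of `G` as the slice `G × {i}`. -/
def levelEmb (G : Type*) (i : Fin m) : G ↪ G × Fin m :=
  ⟨fun g => (g, i), fun x y h => by simpa using h⟩

/-- The translation unitary `b (h, i) ↦ b (g + h, i)`. -/
noncomputable def shiftOp (g : G) : H →L[ℂ] H := b.transfer (shiftEmb m g) (.refl _)

/-- The operator `b (g, k) ↦ δ_{jk} b (g, i)`. -/
noncomputable def unitOp (i j : Fin m) : H →L[ℂ] H := b.transfer (levelEmb G i) (levelEmb G j)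

theorem shiftOp_apply (g h : G) (i : Fin m) : shiftOp b g (b (h, i)) = b (g + h, i) :=
  b.transfer_apply (shiftEmb m g) (.refl _) (h, i)

theorem star_shiftOp (hG : ∀ g : G, g + g = 0) (g : G) : star (shiftOp b g) = shiftOp b g := by
  rw [shiftOp, b.star_transfer]
  refine b.clm_ext fun ⟨h, i⟩ => ?_
  have h1 := b.transfer_apply (.refl _) (shiftEmb m g) (g + h, i)
  have h2 : shiftEmb m g (g + h, i) = (h, i) := by
    change (g + (g + h), i) = (h, i)
    rw [← add_assoc, hG, zero_add]
  rw [h2] at h1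
  rw [h1]
  exact (shiftOp_apply b g h i).symm

theorem shiftOp_mul_self (hG : ∀ g : G, g + g = 0) (g : G) : shiftOp b g * shiftOp b g = 1 :=
  b.clm_ext fun ⟨h, i⟩ => by simp [shiftOp_apply, ← add_assoc, hG]

theorem unitOp_apply (i j k : Fin m) (g : G) :
    unitOp b i j (b (g, k)) = if j = k then b (g, i) else 0 := by
  split_ifs with h
  · subst h; exact b.transfer_apply (levelEmb G i) (levelEmb G j) g
  · exact b.transfer_apply_of_notMem _ _ fun l hl => h (congrArg Prod.snd hl)

theorem star_unitOp (i j : Fin m) : star (unitOp b i j) = unitOp b j i :=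
  b.star_transfer _ _

theorem isMatrixUnits_unitOp : IsMatrixUnits (unitOp b) where
  mul i j k l := b.clm_ext fun ⟨g, n⟩ => by
    rw [mul_apply_eq_comp, unitOp_apply]
    split_ifs <;> simp_all [unitOp_apply]
  sum := b.clm_ext fun ⟨g, n⟩ => by simp [unitOp_apply]
  star_eq := star_unitOp b

theorem shiftOp_commute_unitOp (g : G) (i j : Fin m) : Commute (shiftOp b g) (unitOp b i j) :=
  b.clm_ext fun ⟨h, n⟩ => by
    simp only [mul_apply_eq_comp, unitOp_apply, shiftOp_apply]
    split_ifs <;> simp [shiftOp_apply]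

/-- An operator commuting with all translations and all matrix units has a symmetric matrix in the
basis `b`: its entries are `δ_{ij} α (g - h)`, and `g - h = h - g` since `G` has exponent two. -/
theorem inner_comm_of_commute (hG : ∀ g : G, g + g = 0) {a : H →L[ℂ] H}
    (hs : ∀ g, Commute (shiftOp b g) a) (hu : ∀ i j, Commute (unitOp b i j) a)
    (x y : G × Fin m) : ⟪b x, a (b y)⟫_ℂ = ⟪b y, a (b x)⟫_ℂ := by
  obtain ⟨g, i⟩ := x
  obtain ⟨h, j⟩ := y
  have adj {T : H →L[ℂ] H} (hT : Commute T a) (u v : H) :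
      ⟪star T u, a v⟫_ℂ = ⟪u, a (T v)⟫_ℂ := by
    rw [ContinuousLinearMap.star_eq_adjoint, ContinuousLinearMap.adjoint_inner_left,
      ← mul_apply_eq_comp, hT.eq, mul_apply_eq_comp]
  -- For `i = j`, translation by `g + h` exchanges `(g, i)` and `(h, i)`.
  rcases eq_or_ne i j with rfl | hij
  · have h1 := adj (hs (g + h)) (b (h, i)) (b (h, i))
    have e1 : g + h + h = g := by rw [add_assoc, hG, add_zero]
    rwa [star_shiftOp b hG, shiftOp_apply, e1] at h1
  · have hz (g h : G) {i j : Fin m} (hij : i ≠ j) : ⟪b (g, i), a (b (h, j))⟫_ℂ = 0 := by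
      have h1 := adj (hu j j) (b (g, i)) (b (h, j))
      rw [star_unitOp, unitOp_apply, unitOp_apply, if_neg hij.symm, if_pos rfl,
        inner_zero_left] at h1
      exact h1.symm
    rw [hz g h hij, hz h g hij.symm]

/-- The commutant of the translations and the matrix units is commutative: the product `a * c` lies
in it, so the matrices of `a`, `c` and `a * c` are all symmetric, and transposition reverses
products. -/
theorem commute_of_commute (hG : ∀ g : G, g + g = 0) {a c : H →L[ℂ] H}
    (has : ∀ g, Commute (shiftOp b g) a) (hau : ∀ i j, Commute (unitOp b i j) a)
    (hcs : ∀ g, Commute (shiftOp b g) c) (hcu : ∀ i j, Commute (unitOp b i j) c) :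
    Commute a c := by
  refine b.clm_ext fun y => b.ext_inner fun x => ?_
  have key (a c : H →L[ℂ] H) (x y : G × Fin m) : ⟪b x, (a * c) (b y)⟫_ℂ
      = ∑' z, ⟪b x, a (b z)⟫_ℂ * ⟪b z, c (b y)⟫_ℂ := by
    rw [mul_apply_eq_comp, ← ContinuousLinearMap.adjoint_inner_left,
      ← b.tsum_inner_mul_inner]
    simp_rw [ContinuousLinearMap.adjoint_inner_left]
  rw [inner_comm_of_commute b hG (fun g => (has g).mul_right (hcs g))
    (fun i j => (hau i j).mul_right (hcu i j)), key, key]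
  refine tsum_congr fun z => ?_
  rw [inner_comm_of_commute b hG has hau, inner_comm_of_commute b hG hcs hcu, mul_comm]

/-- A vector mapped to `±` itself by every translation has coefficients of constant modulus along
each infinite slice `G × {i}`; being square summable, they vanish. -/
theorem eq_zero_of_shiftOp [Infinite G] (hG : ∀ g : G, g + g = 0) {x : H}
    (hx : ∀ g, shiftOp b g x = x ∨ shiftOp b g x = -x) : x = 0 := by
  refine b.ext_inner fun ⟨g₀, i⟩ => ?_
  rw [inner_zero_right]
  have hc (g : G) : ⟪x, b (g, i)⟫_ℂ * ⟪b (g, i), x⟫_ℂ = ⟪x, b (0, i)⟫_ℂ * ⟪b (0, i), x⟫_ℂ := by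
    have h1 : b (g, i) = shiftOp b g (b (0, i)) := by rw [shiftOp_apply, add_zero]
    have h2 : ⟪b (g, i), x⟫_ℂ = ⟪b (0, i), shiftOp b g x⟫_ℂ := by
      rw [h1, ← ContinuousLinearMap.adjoint_inner_right, ← ContinuousLinearMap.star_eq_adjoint,
        star_shiftOp b hG]
    have h3 : ⟪x, b (g, i)⟫_ℂ = ⟪shiftOp b g x, b (0, i)⟫_ℂ := by
      rw [← inner_conj_symm, h2, inner_conj_symm]
    rw [h2, h3]
    rcases hx g with h | h <;> simp [h]
  have hs : Summable fun g : G => ⟪x, b (g, i)⟫_ℂ * ⟪b (g, i), x⟫_ℂ :=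
    (b.summable_inner_mul_inner x x).comp_injective (levelEmb G i).injective
  have h0 : ⟪x, b (g₀, i)⟫_ℂ * ⟪b (g₀, i), x⟫_ℂ = 0 := by
    simp_rw [hc] at hs ⊢
    exact (summable_const_iff _).1 hs
  rcases mul_eq_zero.1 h0 with h | h
  · exact inner_eq_zero_symm.1 h
  · exact h

/-- The von Neumann algebra of operators commuting with all translations `shiftOp b g`. The algebra
sought in the theorem is its commutant, the one generated by the translations. -/
noncomputable def shiftCommutant : VonNeumannAlgebra H where
  toStarSubalgebra := StarSubalgebra.centralizer ℂ (Set.range (shiftOp b))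
  centralizer_centralizer' := by simp

/-- Adjoints of the translations impose no further condition, as the translations are
self-adjoint. -/
theorem mem_shiftCommutant (hG : ∀ g : G, g + g = 0) {a : H →L[ℂ] H} :
    a ∈ shiftCommutant b ↔ ∀ g, Commute (shiftOp b g) a := by
  change a ∈ StarSubalgebra.centralizer ℂ (Set.range (shiftOp b)) ↔ _
  simp [StarSubalgebra.mem_centralizer_iff, star_shiftOp b hG, Commute, SemiconjBy]

theorem shiftOp_mem_commutant (hG : ∀ g : G, g + g = 0) (g : G) :
    shiftOp b g ∈ (shiftCommutant b).commutant :=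
  VonNeumannAlgebra.mem_commutant_iff.2 fun _ ha => ((mem_shiftCommutant b hG).1 ha g).symm.eq

theorem unitOp_mem (hG : ∀ g : G, g + g = 0) (i j : Fin m) : unitOp b i j ∈ shiftCommutant b :=
  (mem_shiftCommutant b hG).2 fun g => shiftOp_commute_unitOp b g i j

/-- The algebra generated by the translations is commutative. -/
theorem commutant_le (hG : ∀ g : G, g + g = 0) {a : H →L[ℂ] H}
    (ha : a ∈ (shiftCommutant b).commutant) : a ∈ shiftCommutant b := by
  refine (mem_shiftCommutant b hG).2 fun g => ?_
  exact VonNeumannAlgebra.mem_commutant_iff.1 ha _ ((mem_shiftCommutant b hG).2 fun h =>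
    b.clm_ext fun ⟨k, i⟩ => by simp [shiftOp_apply, add_left_comm])

/-- The algebra generated by the translations is the relative commutant of the matrix units in
`shiftCommutant b`: an element of that relative commutant commutes with the matrix coefficients of
any `c ∈ shiftCommutant b` by `commute_of_commute`, hence with `c`. -/
theorem mem_commutant_iff_units (hG : ∀ g : G, g + g = 0) (a : H →L[ℂ] H) :
    a ∈ (shiftCommutant b).commutant ↔
      a ∈ shiftCommutant b ∧ ∀ i j, Commute (unitOp b i j) a := by
  refine ⟨fun ha => ⟨commutant_le b hG ha, fun i j =>
    VonNeumannAlgebra.mem_commutant_iff.1 ha _ (unitOp_mem b hG i j)⟩, fun ⟨ha, hu⟩ => ?_⟩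
  refine VonNeumannAlgebra.mem_commutant_iff.2 fun c hc => ?_
  have he := isMatrixUnits_unitOp b
  suffices Commute c a from this.eq
  rw [← he.sum_matCoeff_mul c]
  refine Commute.sum_left _ _ _ fun i _ => Commute.sum_left _ _ _ fun j _ =>
    Commute.mul_left ?_ (hu i j)
  have hmem : matCoeff (unitOp b) c i j ∈ shiftCommutant b :=
    IsMatrixUnits.matCoeff_mem (B := (shiftCommutant b).toStarSubalgebra) (unitOp_mem b hG) hc i j
  refine commute_of_commute b hG ((mem_shiftCommutant b hG).1 hmem) (fun p q => ?_)
    ((mem_shiftCommutant b hG).1 ha) hu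
  rw [Commute, SemiconjBy, he.unit_mul_matCoeff, he.matCoeff_mul_unit]

/-- For `p` minimal, the projection `(1 + shiftOp b g) / 2 * p ≤ p` is `0` or `p`, so each translation
acts on the range of `p` as `±1`, which contradicts `eq_zero_of_shiftOp`. -/
theorem not_isMinimalProjection [Infinite G] (hG : ∀ g : G, g + g = 0) (p : H →L[ℂ] H) :
    ¬ (shiftCommutant b).commutant.IsMinimalProjection p := by
  rintro ⟨hpA, hp0, hps, hpp, hmin⟩
  apply hp0
  have hor (g : G) : shiftOp b g * p = p ∨ shiftOp b g * p = -p := by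
    have hcom : shiftOp b g * p = p * shiftOp b g :=
      (mem_shiftCommutant b hG).1 (commutant_le b hG hpA) g
    have hUU := shiftOp_mul_self b hG g
    have hUs := star_shiftOp b hG g
    have hUA := shiftOp_mem_commutant b hG g
    generalize shiftOp b g = U at *
    have hUpp : U * p * p = U * p := by rw [mul_assoc, hpp]
    have hpUp : p * (U * p) = U * p := by rw [← mul_assoc, ← hcom, hUpp]
    have hUpUp : U * p * (U * p) = p := by rw [mul_assoc, hpUp, ← mul_assoc, hUU, one_mul]
    have hq : ((1 / 2 : ℂ) • (p + U * p) = 0 ∨ (1 / 2 : ℂ) • (p + U * p) = p) := by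
      apply hmin
      · exact ((shiftCommutant b).commutant.toStarSubalgebra).smul_mem
          (add_mem hpA (mul_mem hUA hpA)) _
      · rw [star_smul, star_add, star_mul, hps, hUs, ← hcom]
        simp
      · rw [smul_mul_smul_comm, add_mul, mul_add, mul_add, hpp, hpUp, hUpp, hUpUp]
        module
      · rw [smul_mul_assoc, add_mul, hpp, hUpp]
    rcases hq with h | h
    · right
      have h' := congrArg (fun T => (2 : ℂ) • T - p) h
      simp only [smul_zero, zero_sub] at h'
      rw [← h']
      module
    · left
      have h' := congrArg (fun T => (2 : ℂ) • T - p) h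
      rw [show (2 : ℂ) • p - p = p by module] at h'
      conv_rhs => rw [← h']
      module
  ext y
  refine eq_zero_of_shiftOp b hG fun g => ?_
  rcases hor g with h | h
  · left; exact congrArg (fun T : H →L[ℂ] H => T y) h
  · right; exact congrArg (fun T : H →L[ℂ] H => T y) h

end Construction

/-- Existence: on an infinite-dimensional separable complex Hilbert space, for every
positive integer `m` there is a commutative von Neumann algebra with no minimal
projection whose commutant is *-isomorphic to the `m × m` matrices over it. -/
theorem vonNeumann_exists_continuum
    (H : Type*) [NormedAddCommGroup H] [InnerProductSpace ℂ H] [CompleteSpace H]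
    [TopologicalSpace.SeparableSpace H] (hinf : ¬ FiniteDimensional ℂ H)
    (m : ℕ) (hm : 0 < m) :
    ∃ A : VonNeumannAlgebra H,
      (∀ x ∈ A, ∀ y ∈ A, x * y = y * x) ∧
      (¬ ∃ p, A.IsMinimalProjection p) ∧
      Nonempty ((A.commutant.toStarSubalgebra) ≃⋆ₐ[ℂ]
        Matrix (Fin m) (Fin m) A.toStarSubalgebra) := by
  have : NeZero m := ⟨hm.ne'⟩
  obtain ⟨b⟩ := exists_hilbertBasis_of_infinite hinf ((ℕ →₀ ZMod 2) × Fin m)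
  have hG (g : ℕ →₀ ZMod 2) : g + g = 0 := by
    ext n
    exact CharTwo.add_self_eq_zero (g n)
  refine ⟨(shiftCommutant b).commutant, fun x hx y hy => ?_, ?_, ?_⟩
  · exact (VonNeumannAlgebra.mem_commutant_iff.1 hx y (commutant_le b hG hy)).symm
  · rintro ⟨p, hp⟩
    exact not_isMinimalProjection b hG p hp
  · rw [VonNeumannAlgebra.commutant_commutant]
    exact ⟨(isMatrixUnits_unitOp b).starAlgEquiv _ _ (unitOp_mem b hG)
      (mem_commutant_iff_units b hG)⟩
end
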